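/- arXiv:1903.08107 — 2 statements merged into one kernel-verified Lean document; each statement's English description precedes it below -/
import Mathlib

section
/- Let k be a field, let R = k[X₀,X₁,X₂,X₃,X₄,X₅] be the polynomial ring in six variables over k, and let B be the product ideal (X₀,X₁)·(X₂,X₃)·(X₄,X₅) (the irrelevant ideal of ℙ¹ × ℙ¹ × ℙ¹). Then the local cohomology modules Hⁱ_B(R) of R with support in B vanish for every natural number i with i ∉ {2,3,4}. -/
open MvPolynomial

/-!
`Hⁱ_B(R)` is the colimit over `t` of `Extⁱ(R/Bᵗ, R)`, so it vanishes as soon as every transition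
map out of stage `t`, to some later stage `s`, factors through `Extⁱ(R/L, R) = 0` for an ideal `L`
with `Bˢ ≤ L ≤ Bᵗ` (`localCohomology_subsingleton`).

For `i = 0, 1` take `L = Bᵗ`. It contains the coprime elements `(X₀X₂X₄)ᵗ` and `(X₁X₃X₅)ᵗ`, which
form a regular sequence on `R` of length two (when they are units, `R/Bᵗ = 0`), so
`Ext⁰(R/Bᵗ, R)` and `Ext¹(R/Bᵗ, R)` vanish.

For `i ≥ 5` take `L = (X₀ᵗ,X₁ᵗ)(X₂ᵗ,X₃ᵗ)(X₄ᵗ,X₅ᵗ)`, which lies between `B²ᵗ` and `Bᵗ`. If `x, y` is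
a regular sequence on `R` and `x` is a nonzerodivisor modulo an ideal `K`, the Koszul-type sequence
`0 → K → K² → (x,y)K → 0` is exact, so multiplying `K` by `(x,y)` raises the projective dimension
by at most one (`hasPD_mul`). Starting from `K = R` and multiplying three times, `L` has projective
dimension at most `3` and `R/L` at most `4`. The nonzerodivisor hypothesis holds because each `K`
is a monomial ideal not involving the variable `x`.

`localCohomology` uses the `Ext` defined by left-deriving `Hom`, whereas projective dimension and
the long exact sequences are about `Abelian.Ext`; `isZero_ext_of_subsingleton` transfers vanishing
from the latter to the former.
-/

section

open CategoryTheory Limits Opposite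

universe u

/-! ### Vanishing of `Ext` and of local cohomology -/

/-- Both versions of `Ext` are computed by the same projective resolution of `M`. -/
theorem isZero_ext_of_subsingleton {R : Type u} [CommRing R] (M N : ModuleCat.{u} R) (n : ℕ)
    (h : Subsingleton (Abelian.Ext M N n)) :
    IsZero (((Ext R (ModuleCat.{u} R) n).obj (op M)).obj N) := by
  let P := ProjectiveResolution.of M
  refine IsZero.of_iso ?_ (P.isoExt n N)
  rw [← HomologicalComplex.exactAt_iff_isZero_homology]
  cases n with
  | zero =>
    rw [HomologicalComplex.exactAt_iff' _ 0 0 1 (by simp) (by simp), ShortComplex.moduleCat_exact_iff]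
    intro (f : P.complex.X 0 ⟶ N) hf
    have hf' : P.complex.d 1 0 ≫ f = 0 := hf
    have hd : P.π.f 0 ≫ P.exact₀.desc f hf' = f := P.exact₀.g_desc f hf'
    refine ⟨0, ?_⟩
    have : P.exact₀.desc f hf' = 0 := by
      apply (Abelian.Ext.homEquiv₀ (X := M) (Y := N)).symm.injective
      exact Subsingleton.elim _ _
    rw [map_zero, ← hd, this, comp_zero]
    rfl
  | succ n =>
    rw [HomologicalComplex.exactAt_iff' _ n (n+1) (n+2) (by simp) (by simp),
      ShortComplex.moduleCat_exact_iff]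
    intro (f : P.complex.X (n+1) ⟶ N) hf
    have hf' : P.complex.d (n+2) (n+1) ≫ f = 0 := hf
    obtain ⟨g, hg⟩ := (P.extMk_eq_zero_iff f (n+2) rfl hf' n rfl).1 (Subsingleton.elim _ _)
    exact ⟨g, hg⟩

/-- A sandwich criterion: `Hⁱ_J(M) = 0` if between any power of `J` and some later power
there is an ideal `L` with `Extⁱ(R/L, M) = 0`. -/
theorem localCohomology_subsingleton {R : Type u} [CommRing R] (J : Ideal R) (M : ModuleCat.{u} R)
    (i : ℕ)
    (h : ∀ t : ℕ, ∃ s : ℕ, ∃ L : Ideal R, t ≤ s ∧ J ^ s ≤ L ∧ L ≤ J ^ t ∧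
      IsZero (((Ext R (ModuleCat.{u} R) i).obj (op (ModuleCat.of R (R ⧸ L)))).obj M)) :
    Subsingleton ((localCohomology J i).obj M) := by
  rw [← ModuleCat.isZero_iff_subsingleton]
  have := localCohomology.hasColimitDiagram.{u, 0} (localCohomology.idealPowersDiagram J) i
  let D := localCohomology.diagram (localCohomology.idealPowersDiagram J) i
  change IsZero ((colimit D).obj M)
  refine IsZero.of_iso ?_ (colimitObjIsoColimitCompEvaluation D M)
  rw [IsZero.iff_id_eq_zero]
  refine colimit.hom_ext fun t => ?_
  obtain ⟨t⟩ := t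
  obtain ⟨t⟩ := t
  obtain ⟨s, L, hts, hsL, hLt, hL⟩ := h t
  let w : (op (op t) : ℕᵒᵖᵒᵖ) ⟶ op (op s) := (homOfLE hts).op.op
  rw [comp_zero, Category.comp_id, ← colimit.w _ w]
  let p : ModuleCat.of R (R ⧸ J ^ s) ⟶ ModuleCat.of R (R ⧸ L) :=
    ModuleCat.ofHom (Submodule.mapQ _ _ LinearMap.id hsL)
  let q : ModuleCat.of R (R ⧸ L) ⟶ ModuleCat.of R (R ⧸ J ^ t) :=
    ModuleCat.ofHom (Submodule.mapQ _ _ LinearMap.id hLt)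
  have hpq : (localCohomology.ringModIdeals (localCohomology.idealPowersDiagram J)).map w.unop
      = p ≫ q := by
    refine ModuleCat.hom_ext (LinearMap.ext fun x => ?_)
    obtain ⟨x, rfl⟩ := Submodule.Quotient.mk_surjective _ x
    rfl
  have : (D ⋙ (evaluation _ _).obj M).map w = 0 := by
    change ((Ext R (ModuleCat.{u} R) i).map
      ((localCohomology.ringModIdeals (localCohomology.idealPowersDiagram J)).map w.unop).op).app M
      = 0
    rw [hpq]
    change ((Ext R (ModuleCat.{u} R) i).map (q.op ≫ p.op)).app M = 0
    rw [Functor.map_comp, NatTrans.comp_app, hL.eq_of_tgt (NatTrans.app _ M) 0, zero_comp]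
  rw [this, zero_comp]

/-! ### Projective dimension of products of ideals -/

theorem hasPD_prod {R : Type u} [CommRing R] (M : ModuleCat.{u} R) (n : ℕ)
    [HasProjectiveDimensionLT M n] : HasProjectiveDimensionLT (ModuleCat.of R (M × M)) n :=
  hasProjectiveDimensionLT_of_iso (ModuleCat.biprodIsoProd M M) n

theorem hasPD_quotient {R : Type u} [CommRing R] (I : Ideal R) (n : ℕ)
    (h : HasProjectiveDimensionLT (ModuleCat.of R I) n) :
    HasProjectiveDimensionLT (ModuleCat.of R (R ⧸ I)) (n + 1) := by
  let S : ShortComplex (ModuleCat.{u} R) := ShortComplex.mk (ModuleCat.ofHom I.subtype)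
    (ModuleCat.ofHom (Submodule.mkQ I)) (by
      ext x
      exact (Submodule.Quotient.mk_eq_zero I).2 x.2)
  have hS : S.ShortExact := ModuleCat.shortComplex_shortExact S
    (LinearMap.exact_subtype_mkQ I) (Submodule.injective_subtype I) (Submodule.mkQ_surjective I)
  have : Projective (ModuleCat.of R R) := inferInstance
  exact hS.hasProjectiveDimensionLT_X₃ n h
    (hasProjectiveDimensionLT_of_ge (ModuleCat.of R R) 1 (n + 1) (by lia))

/-- If `x, y` is a regular sequence and `x` is a nonzerodivisor modulo `K`, then
`0 → K → K × K → (x, y) K → 0`, with maps `w ↦ (-yw, xw)` and `(u, v) ↦ xu + yv`, is exact. -/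
theorem hasPD_mul {R : Type u} [CommRing R] [IsDomain R] (x y : R) (K : Ideal R) (n : ℕ)
    (hx0 : x ≠ 0) (hxy : ∀ z, x ∣ y * z → x ∣ z) (hK : ∀ z, x * z ∈ K → z ∈ K)
    (h : HasProjectiveDimensionLT (ModuleCat.of R K) n) :
    HasProjectiveDimensionLT (ModuleCat.of R (Ideal.span {x, y} * K : Ideal R)) (n + 1) := by
  let f : K →ₗ[R] K × K := LinearMap.prod (-(y • LinearMap.id)) (x • LinearMap.id)
  let g : K × K →ₗ[R] (Ideal.span {x, y} * K : Ideal R) :=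
    LinearMap.codRestrict _
      (LinearMap.coprod (x • Submodule.subtype K) (y • Submodule.subtype K)) (fun c => by
        refine add_mem (Ideal.mul_mem_mul (Ideal.subset_span (by simp)) c.1.2)
          (Ideal.mul_mem_mul (Ideal.subset_span (by simp)) c.2.2))
  have hg (c : K × K) : (g c : R) = x * c.1 + y * c.2 := rfl
  have hfg : Function.Exact f g := by
    rintro ⟨⟨u, hu⟩, ⟨v, hv⟩⟩
    constructor
    · intro h0
      have h1 : x * u + y * v = 0 := congrArg Subtype.val h0
      obtain ⟨w, rfl⟩ := hxy v ⟨-u, by linear_combination h1⟩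
      refine ⟨⟨w, hK w hv⟩, ?_⟩
      have : u = -(y * w) := by
        apply mul_left_cancel₀ hx0
        linear_combination h1
      ext
      · simp [f, this]
      · simp [f]
    · rintro ⟨w, hw⟩
      rw [← hw]
      apply Subtype.ext
      rw [hg]
      simp [f]
      ring
  have hf : Function.Injective f := by
    intro a b hab
    have := congrArg (fun c : K × K => (c.2 : R)) hab
    exact Subtype.ext (mul_left_cancel₀ hx0 (by simpa [f] using this))
  have hgs : Function.Surjective g := by
    rintro ⟨z, hz⟩
    have hz' := hz
    rw [Ideal.span_insert, Ideal.sup_mul, Submodule.mem_sup] at hz'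
    obtain ⟨a, ha, b, hb, rfl⟩ := hz'
    obtain ⟨u, hu, rfl⟩ := Ideal.mem_span_singleton_mul.1 ha
    obtain ⟨v, hv, rfl⟩ := Ideal.mem_span_singleton_mul.1 hb
    exact ⟨(⟨u, hu⟩, ⟨v, hv⟩), rfl⟩
  let S : ShortComplex (ModuleCat.{u} R) := ShortComplex.mk (ModuleCat.ofHom f)
    (ModuleCat.ofHom g) (by ext c : 2; exact (hfg _).2 ⟨c, rfl⟩)
  have hS : S.ShortExact := ModuleCat.shortComplex_shortExact S hfg hf hgs
  have := hasPD_prod (ModuleCat.of R K) n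
  exact hS.hasProjectiveDimensionLT_X₃ n h
    (hasProjectiveDimensionLT_of_ge (ModuleCat.of R (K × K)) n (n + 1) (by lia))

/-! ### Low degrees: ideals containing a regular sequence -/

/-- Multiplication by `g` is zero on `R/I` and injective on `N`. -/
theorem ext_zero_subsingleton {R : Type u} [CommRing R] (I : Ideal R) (N : ModuleCat.{u} R) (g : R)
    (hg : g ∈ I) (hN : ∀ z : N, g • z = 0 → z = 0) :
    Subsingleton (Abelian.Ext (ModuleCat.of R (R ⧸ I)) N 0) := by
  have : Subsingleton (ModuleCat.of R (R ⧸ I) ⟶ N) := by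
    refine subsingleton_of_forall_eq 0 fun φ => ?_
    refine ModuleCat.hom_ext (LinearMap.ext fun x => ?_)
    refine hN _ ?_
    have hx : g • x = 0 := by
      obtain ⟨y, rfl⟩ := Ideal.Quotient.mk_surjective x
      exact Ideal.Quotient.eq_zero_iff_mem.2 (I.mul_mem_right y hg)
    rw [← map_smul, hx, map_zero]
  exact Abelian.Ext.homEquiv₀.subsingleton

/-- In the long exact sequence of `0 → R → R → R/f → 0`, multiplication by `f` is zero on
`Ext¹(R/I, R)`, which is therefore a quotient of `Hom(R/I, R/f) = 0`. -/
theorem ext_one_subsingleton {R : Type u} [CommRing R] [IsDomain R] (I : Ideal R) (f g : R)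
    (hf : f ∈ I) (hg : g ∈ I) (hf0 : f ≠ 0) (hfg : ∀ z, f ∣ g * z → f ∣ z) :
    Subsingleton (Abelian.Ext (ModuleCat.of R (R ⧸ I)) (ModuleCat.of R R) 1) := by
  let S : ShortComplex (ModuleCat.{u} R) := ShortComplex.mk (f • 𝟙 (ModuleCat.of R R))
    (ModuleCat.ofHom (Submodule.mkQ (Ideal.span {f}))) (by
      ext
      exact (Submodule.Quotient.mk_eq_zero _).2
        (Ideal.mul_mem_right _ _ (Ideal.mem_span_singleton_self f)))
  have hS : S.ShortExact := by
    refine ModuleCat.shortComplex_shortExact S ?_ ?_ (Submodule.mkQ_surjective _)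
    · intro (z : R)
      refine (Submodule.Quotient.mk_eq_zero _).trans (Ideal.mem_span_singleton.trans ?_)
      exact ⟨fun ⟨w, hw⟩ => ⟨w, hw.symm⟩, fun ⟨w, hw⟩ => ⟨w, hw.symm⟩⟩
    · intro (a : R) (b : R) hab
      exact mul_left_cancel₀ hf0 hab
  refine subsingleton_of_forall_eq 0 fun x => ?_
  have hfI : f • 𝟙 (ModuleCat.of R (R ⧸ I)) = 0 := by
    refine ModuleCat.hom_ext (LinearMap.ext fun y => ?_)
    obtain ⟨y, rfl⟩ := Ideal.Quotient.mk_surjective y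
    exact Ideal.Quotient.eq_zero_iff_mem.2 (I.mul_mem_right y hf)
  have hfx : x.comp (Abelian.Ext.mk₀ S.f) (add_zero 1) = 0 := by
    rw [← Abelian.Ext.smul_eq_comp_mk₀, ← Abelian.Ext.mk₀_id_comp x, ← Abelian.Ext.smul_comp,
      ← Abelian.Ext.mk₀_smul, hfI, Abelian.Ext.mk₀_zero, Abelian.Ext.zero_comp]
  obtain ⟨x₃, rfl⟩ := Abelian.Ext.covariant_sequence_exact₁ _ hS x hfx (zero_add 1)
  have : Subsingleton (Abelian.Ext (ModuleCat.of R (R ⧸ I)) S.X₃ 0) := by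
    refine ext_zero_subsingleton I _ g hg fun z hz => ?_
    obtain ⟨z, rfl⟩ := Ideal.Quotient.mk_surjective (I := Ideal.span {f}) z
    have hz' : g * z ∈ Ideal.span {f} := Ideal.Quotient.eq_zero_iff_mem.1 hz
    rw [Ideal.mem_span_singleton] at hz'
    exact Ideal.Quotient.eq_zero_iff_mem.2 (Ideal.mem_span_singleton.2 (hfg z hz'))
  rw [Subsingleton.elim x₃ 0, Abelian.Ext.zero_comp]

/-! ### Monomial ideals -/

section Monomial

variable {σ : Type} {k : Type u} [Field k]

/-- The monomial ideal of `k[σ]` generated by the monomials with exponents in `S`. -/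
noncomputable def monIdeal (k : Type u) [Field k] (S : Set (σ →₀ ℕ)) : Ideal (MvPolynomial σ k) :=
  Ideal.span ((fun s => monomial s (1 : k)) '' S)

open Pointwise in
theorem monIdeal_mul (S T : Set (σ →₀ ℕ)) :
    monIdeal k S * monIdeal k T = monIdeal k (S + T) := by
  rw [monIdeal, monIdeal, monIdeal, Ideal.span_mul_span', ← Set.image2_mul, ← Set.image2_add,
    Set.image2_image_left, Set.image2_image_right, Set.image_image2]
  simp [monomial_mul]

theorem span_pow_pair (a b : σ) (t : ℕ) :
    Ideal.span {X a ^ t, X b ^ t} =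
      monIdeal k {Finsupp.single a t, Finsupp.single b t} := by
  simp [monIdeal, Set.image_pair, X_pow_eq_monomial]

/-- Powers of a variable that does not occur in the generators of a monomial ideal are
nonzerodivisors modulo that ideal. -/
theorem mem_monIdeal_of_X_pow_mul_mem (S : Set (σ →₀ ℕ)) (a : σ) (hS : ∀ s ∈ S, s a = 0) (t : ℕ)
    (z : MvPolynomial σ k) (hz : X a ^ t * z ∈ monIdeal k S) : z ∈ monIdeal k S := by
  rw [monIdeal, mem_ideal_span_monomial_image] at hz ⊢
  intro m hm
  obtain ⟨s, hs, hsm⟩ := hz (Finsupp.single a t + m) (by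
    rw [mem_support_iff, X_pow_eq_monomial, coeff_monomial_mul, one_mul]
    exact mem_support_iff.1 hm)
  refine ⟨s, hs, fun c => ?_⟩
  by_cases hc : c = a
  · rw [hc, hS s hs]
    exact Nat.zero_le _
  · simpa [Finsupp.single_apply, Ne.symm hc] using hsm c

theorem isRelPrime_X {a b : σ} (hab : a ≠ b) :
    IsRelPrime (X a : MvPolynomial σ k) (X b) := by
  rw [X_prime.irreducible.isRelPrime_iff_not_dvd]
  rwa [X_dvd_X]

theorem hasPD_mul_monIdeal (S : Set (σ →₀ ℕ)) (a b : σ) (hab : a ≠ b) (hS : ∀ s ∈ S, s a = 0)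
    (t n : ℕ) (h : HasProjectiveDimensionLT (ModuleCat.of (MvPolynomial σ k) (monIdeal k S)) n) :
    HasProjectiveDimensionLT (ModuleCat.of (MvPolynomial σ k)
      (Ideal.span {X a ^ t, X b ^ t} * monIdeal k S : Ideal (MvPolynomial σ k))) (n + 1) :=
  hasPD_mul _ _ _ n (pow_ne_zero _ (X_ne_zero a))
    (fun _ hz => ((isRelPrime_X hab).pow).dvd_of_dvd_mul_left hz)
    (mem_monIdeal_of_X_pow_mul_mem S a hS t) h

theorem pow_span_pair_le (a b : σ) (t : ℕ) :
    (Ideal.span {X a, X b} : Ideal (MvPolynomial σ k)) ^ (t + t) ≤ Ideal.span {X a ^ t, X b ^ t} := by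
  rw [Ideal.span_insert, Ideal.span_insert, ← Ideal.span_singleton_pow, ← Ideal.span_singleton_pow]
  exact Ideal.sup_pow_add_le_pow_sup_pow

theorem span_pair_pow_le (a b : σ) (t : ℕ) :
    Ideal.span {X a ^ t, X b ^ t} ≤ (Ideal.span {X a, X b} : Ideal (MvPolynomial σ k)) ^ t := by
  rw [Ideal.span_le]
  rintro _ (rfl | rfl) <;> exact Ideal.pow_mem_pow (Ideal.subset_span (by simp)) t

end Monomial

/-- The quotient by `(X₀ᵗ,X₁ᵗ)(X₂ᵗ,X₃ᵗ)(X₄ᵗ,X₅ᵗ)` has projective dimension at most `4`. -/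
theorem hasPD_frobenius (k : Type) [Field k] (t : ℕ) :
    HasProjectiveDimensionLT (ModuleCat.of (MvPolynomial (Fin 6) k) (MvPolynomial (Fin 6) k ⧸
      (Ideal.span {X 0 ^ t, X 1 ^ t} * Ideal.span {X 2 ^ t, X 3 ^ t} *
        Ideal.span {X 4 ^ t, X 5 ^ t} : Ideal (MvPolynomial (Fin 6) k)))) 5 := by
  have h0 : HasProjectiveDimensionLT
      (ModuleCat.of (MvPolynomial (Fin 6) k) (monIdeal k ({0} : Set (Fin 6 →₀ ℕ)))) 1 := by
    have h : monIdeal k ({0} : Set (Fin 6 →₀ ℕ)) = ⊤ := by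
      simp [monIdeal]
    rw [h]
    exact hasProjectiveDimensionLT_of_iso (X := ModuleCat.of _ (MvPolynomial (Fin 6) k))
      Submodule.topEquiv.symm.toModuleIso 1
  -- multiply the unit ideal by the three factors in turn, keeping track of monomial generators
  have h1 := hasPD_mul_monIdeal (k := k) {0} (4 : Fin 6) 5 (by decide) (by simp) t 1 h0
  rw [span_pow_pair, monIdeal_mul] at h1
  have h2 := hasPD_mul_monIdeal (k := k) _ (2 : Fin 6) 3 (by decide) (by
    rintro _ ⟨s, (rfl | rfl), _, rfl, rfl⟩ <;> simp) t 2 h1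
  rw [span_pow_pair, monIdeal_mul] at h2
  have h3 := hasPD_mul_monIdeal (k := k) _ (0 : Fin 6) 1 (by decide) (by
    rintro _ ⟨r, (rfl | rfl), _, ⟨s, (rfl | rfl), _, rfl, rfl⟩, rfl⟩ <;>
      simp) t 3 h2
  have h4 := hasPD_quotient _ 4 h3
  rw [← monIdeal_mul, ← monIdeal_mul, ← span_pow_pair, ← span_pow_pair] at h4
  have h : monIdeal k ({0} : Set (Fin 6 →₀ ℕ)) = 1 := by
    simp [monIdeal]
  rwa [h, mul_one, ← mul_assoc] at h4

end

/-- Let `R = k[X₀,…,X₅]` and let `B = (X₀,X₁)·(X₂,X₃)·(X₄,X₅)` be the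
irrelevant ideal of `ℙ¹ × ℙ¹ × ℙ¹`. Then the local cohomology modules `Hⁱ_B(R)` vanish
for every `i ∉ {2,3,4}`. -/
theorem localCohomology_vanishing_P1xP1xP1
    {k : Type} [Field k] (i : ℕ) (hi : i ∉ ({2, 3, 4} : Set ℕ)) :
    Subsingleton
      ((localCohomology
          ((Ideal.span {X (0 : Fin 6), X 1} : Ideal (MvPolynomial (Fin 6) k)) *
            Ideal.span {X 2, X 3} * Ideal.span {X 4, X 5}) i).obj
        (ModuleCat.of (MvPolynomial (Fin 6) k) (MvPolynomial (Fin 6) k))) := by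
  apply localCohomology_subsingleton
  intro t
  rcases Nat.lt_or_ge i 5 with hi5 | hi5
  -- degrees `0` and `1`, with `L = Bᵗ`
  · refine ⟨t, _, le_rfl, le_rfl, le_rfl, isZero_ext_of_subsingleton _ _ _ ?_⟩
    have hf := Ideal.pow_mem_pow (Ideal.mul_mem_mul (Ideal.mul_mem_mul
      (Ideal.subset_span (s := {X (0 : Fin 6), (X 1 : MvPolynomial (Fin 6) k)})
        (Set.mem_insert _ _))
      (Ideal.subset_span (s := {X (2 : Fin 6), (X 3 : MvPolynomial (Fin 6) k)})
        (Set.mem_insert _ _)))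
      (Ideal.subset_span (s := {X (4 : Fin 6), (X 5 : MvPolynomial (Fin 6) k)})
        (Set.mem_insert _ _))) t
    have hg := Ideal.pow_mem_pow (Ideal.mul_mem_mul (Ideal.mul_mem_mul
      (Ideal.subset_span (s := {X (0 : Fin 6), (X 1 : MvPolynomial (Fin 6) k)})
        (Set.mem_insert_of_mem _ rfl))
      (Ideal.subset_span (s := {X (2 : Fin 6), (X 3 : MvPolynomial (Fin 6) k)})
        (Set.mem_insert_of_mem _ rfl)))
      (Ideal.subset_span (s := {X (4 : Fin 6), (X 5 : MvPolynomial (Fin 6) k)})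
        (Set.mem_insert_of_mem _ rfl))) t
    have hf0 : (X (0 : Fin 6) * X 2 * X 4 : MvPolynomial (Fin 6) k) ^ t ≠ 0 := by
      simp [X_ne_zero]
    have hrel : IsRelPrime ((X (0 : Fin 6) * X 2 * X 4 : MvPolynomial (Fin 6) k) ^ t)
        ((X 1 * X 3 * X 5) ^ t) := by
      refine IsRelPrime.pow ?_
      simp only [IsRelPrime.mul_left_iff, IsRelPrime.mul_right_iff]
      refine ⟨⟨⟨⟨?_, ?_⟩, ?_⟩, ⟨?_, ?_⟩, ?_⟩, ⟨?_, ?_⟩, ?_⟩ <;> exact isRelPrime_X (by decide)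
    simp only [Set.mem_insert_iff, Set.mem_singleton_iff, not_or] at hi
    obtain rfl | rfl : i = 0 ∨ i = 1 := by omega
    · exact ext_zero_subsingleton _ _ _ hf fun z hz => (mul_eq_zero.1 hz).resolve_left hf0
    · exact ext_one_subsingleton _ _ _ hf hg hf0 fun _ hz => hrel.dvd_of_dvd_mul_left hz
  -- degrees at least `5`, with `L = (X₀ᵗ,X₁ᵗ)(X₂ᵗ,X₃ᵗ)(X₄ᵗ,X₅ᵗ)`
  · refine ⟨t + t, _, Nat.le_add_left t t, ?_, ?_,
      isZero_ext_of_subsingleton _ _ _ ((hasPD_frobenius k t).subsingleton _ _ i hi5 _)⟩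
    · rw [mul_pow, mul_pow]
      exact Ideal.mul_mono (Ideal.mul_mono (pow_span_pair_le _ _ t) (pow_span_pair_le _ _ t))
        (pow_span_pair_le _ _ t)
    · rw [mul_pow, mul_pow]
      exact Ideal.mul_mono (Ideal.mul_mono (span_pair_pow_le _ _ t) (span_pair_pow_le _ _ t))
        (span_pair_pow_le _ _ t)
end

section
/- Let k be a field, R = k[X₀,X₁,X₂,X₃,X₄,X₅], B₁ = (X₀,X₁), B₂ = (X₂,X₃), B₃ = (X₄,X₅), B = B₁·B₂·B₃, and m = (X₀,…,X₅). Then there are isomorphisms of R-modules H²_B(R) ≅ H²_{B₁}(R) ⊕ H²_{B₂}(R) ⊕ H²_{B₃}(R), H³_B(R) ≅ H⁴_{B₁+B₂}(R) ⊕ H⁴_{B₁+B₃}(R) ⊕ H⁴_{B₂+B₃}(R), and H⁴_B(R) ≅ H⁶_m(R). (This is the explicit description of the nonvanishing local cohomology of the coordinate ring of ℙ¹ × ℙ¹ × ℙ¹ with respect to its irrelevant ideal: H²_B ≅ ⊕ᵢ Řᵢ ⊗ Rⱼ ⊗ R_k, H³_B ≅ ⊕ᵢ Rᵢ ⊗ Řⱼ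 ⊗ Ř_k, H⁴_B ≅ Ř₁ ⊗ Ř₂ ⊗ Ř₃.) -/
open MvPolynomial

universe u

/-!
Let `E` be an injective resolution of the polynomial ring `R` and write `Γ_J E` for the subcomplex
of elements killed by a power of `J`. The local cohomology `H^i_J(R) = colim_t Ext^i(R/J^t, R)` is
the cohomology of `Γ_J E` (`localCohomology_equiv_coh`), since a map `R/J^t → E^i` is an element of
`E^i` killed by `J^t`. Mathlib defines local cohomology by the `Ext` functors derived from
projective resolutions, so these are first identified with `Abelian.Ext`, naturally in the first
variable (`extEquiv_naturality`).

Injectivity of the terms of `E` together with Artin–Rees gives `Γ_{IJ} E = Γ_I E + Γ_J E`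
(`gam_mul`), while `Γ_{I+J} E = Γ_I E ∩ Γ_J E` holds always (`gam_add`). With `Gᵢ = Γ_{Bᵢ} E`, the
three claims thus concern the complex `G₁ + G₂ + G₃` and the intersections of the `Gᵢ`.

If `J` is generated by `c` variables, then `Γ_J E` has cohomology only in degree `c`
(`acyclic_gam`): the `t`-th powers of these variables form a regular sequence, so `Ext^i(R/J_t, R)`
vanishes for `i ≠ c`, where `J_t` is the ideal they generate. Hence `Gᵢ`, `Gᵢ ∩ Gⱼ` and
`G₁ ∩ G₂ ∩ G₃` have cohomology only in degrees `2`, `4` and `6` respectively.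

The rest is Mayer–Vietoris for subcomplexes, carried out with elements (`coh_equivs`). In degree `2`
all intersections are acyclic in the relevant degrees, so the cohomology of the sum is the direct
sum. In degree `3` the cohomology of `G₁ + G₂ + G₃` is the direct sum of those of the `Gᵢ + Gⱼ`
(`coh_sup₃_equiv`), and the connecting maps identify the latter with the cohomology of `Gᵢ ∩ Gⱼ` in
degree `4`. In degree `4` two connecting maps lead through
`(G₁ + G₂) ∩ G₃ = G₁ ∩ G₃ + G₂ ∩ G₃` in degree `5` to `G₁ ∩ G₂ ∩ G₃` in degree `6`.
-/

namespace LocCoh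

/-! ### Mayer–Vietoris for subcomplexes -/

section Homological

variable {R : Type*} [CommRing R]

/-- Two quotients of the same module by the same kernel are isomorphic. -/
theorem equivOfSurj {P A B : Type*} [AddCommGroup P] [AddCommGroup A] [AddCommGroup B]
    [Module R P] [Module R A] [Module R B] (p : P →ₗ[R] A) (q : P →ₗ[R] B)
    (hp : Function.Surjective p) (hq : Function.Surjective q)
    (h : ∀ x, p x = 0 ↔ q x = 0) : ∃ e : A ≃ₗ[R] B, ∀ x, e (p x) = q x := by
  have hk : LinearMap.ker p = LinearMap.ker q := by
    ext x; exact h x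
  refine ⟨(p.quotKerEquivOfSurjective hp).symm ≪≫ₗ Submodule.quotEquivOfEq _ _ hk ≪≫ₗ
    q.quotKerEquivOfSurjective hq, fun x => ?_⟩
  have : (p.quotKerEquivOfSurjective hp).symm (p x) = Submodule.Quotient.mk x := by
    rw [LinearEquiv.symm_apply_eq]; rfl
  simp only [LinearEquiv.trans_apply, this]
  rfl

variable {E : ℕ → Type*} [∀ n, AddCommGroup (E n)] [∀ n, Module R (E n)]
  (d : ∀ n, E n →ₗ[R] E (n + 1))

/-- The cocycles of degree `n` of `(E, d)` lying in the graded submodule `G`. -/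
def cocycles (G : ∀ n, Submodule R (E n)) (n : ℕ) : Submodule R (E n) :=
  G n ⊓ LinearMap.ker (d n)

/-- The cohomology in degree `n + 1` of the graded submodule `G` of `(E, d)`, which is meant to be
a subcomplex; degree `0` is never needed. -/
abbrev Coh (G : ∀ n, Submodule R (E n)) (n : ℕ) : Type _ :=
  cocycles d G (n + 1) ⧸ ((G n).map (d n)).submoduleOf (cocycles d G (n + 1))

/-- Every cocycle of degree `n + 1` in `G` is a coboundary from `G`, i.e. the cohomology
`Coh d G n` is zero. -/
def Acyclic (G : ∀ n, Submodule R (E n)) (n : ℕ) : Prop :=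
  ∀ z ∈ G (n + 1), d (n + 1) z = 0 → ∃ y ∈ G n, d n y = z

/-- `G` is a subcomplex of `(E, d)`. -/
def IsSub (G : ∀ n, Submodule R (E n)) : Prop := ∀ n, ∀ x ∈ G n, d n x ∈ G (n + 1)

variable {d}

theorem mk_eq_zero {G : ∀ n, Submodule R (E n)} {n : ℕ} (z : cocycles d G (n + 1)) :
    (((G n).map (d n)).submoduleOf (cocycles d G (n + 1))).mkQ z = 0 ↔
      ∃ y ∈ G n, d n y = z := by
  rw [Submodule.mkQ_apply, Submodule.Quotient.mk_eq_zero]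
  exact Submodule.mem_map

theorem IsSub.sup {A B : ∀ n, Submodule R (E n)} (hA : IsSub d A) (hB : IsSub d B) :
    IsSub d (A ⊔ B) := by
  intro n x hx
  obtain ⟨a, ha, b, hb, rfl⟩ := Submodule.mem_sup.1 hx
  rw [map_add]
  exact Submodule.add_mem_sup (hA _ _ ha) (hB _ _ hb)

theorem IsSub.inf {A B : ∀ n, Submodule R (E n)} (hA : IsSub d A) (hB : IsSub d B) :
    IsSub d (A ⊓ B) := fun _ _ hx => ⟨hA _ _ hx.1, hB _ _ hx.2⟩

/-- Mayer–Vietoris: if the cohomology of `A` and `B` vanishes in degree `n + 1` and that of `A ⊓ B`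
in degree `n + 2`, then that of `A ⊔ B` vanishes in degree `n + 1`. -/
theorem acyclic_sup {A B : ∀ n, Submodule R (E n)} {n : ℕ} (hA : IsSub d A) (hB : IsSub d B)
    (dd : ∀ n x, d (n + 1) (d n x) = 0)
    (h1 : Acyclic d A n) (h2 : Acyclic d B n) (h3 : Acyclic d (A ⊓ B) (n + 1)) :
    Acyclic d (A ⊔ B) n := by
  intro z hz hdz
  obtain ⟨a, ha, b, hb, rfl⟩ := Submodule.mem_sup.1 hz
  rw [map_add] at hdz
  have e : d (n + 1) a = - d (n + 1) b := eq_neg_of_add_eq_zero_left hdz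
  obtain ⟨c, hc, hdc⟩ := h3 (d (n + 1) a)
    ⟨hA _ _ ha, by rw [e]; exact neg_mem (hB _ _ hb)⟩ (dd _ _)
  obtain ⟨a', ha', ea⟩ := h1 (a - c) (sub_mem ha hc.1) (by rw [map_sub, hdc, sub_self])
  obtain ⟨b', hb', eb⟩ := h2 (b + c) (add_mem hb hc.2) (by rw [map_add, hdc, e, add_neg_cancel])
  exact ⟨a' + b', Submodule.add_mem_sup ha' hb', by rw [map_add, ea, eb]; abel⟩

/-- Mayer–Vietoris: the cohomology of `A ⊔ B` in degree `n + 1` is the direct sum of those of `A`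
and `B` if the cohomology of `A ⊓ B` vanishes in degrees `n + 1` and `n + 2`. -/
theorem coh_sup_equiv_prod {A B : ∀ n, Submodule R (E n)} {n : ℕ} (hA : IsSub d A)
    (hB : IsSub d B) (dd : ∀ n x, d (n + 1) (d n x) = 0)
    (h1 : Acyclic d (A ⊓ B) n) (h2 : Acyclic d (A ⊓ B) (n + 1)) :
    Nonempty (Coh d (A ⊔ B) n ≃ₗ[R] Coh d A n × Coh d B n) := by
  let iA : cocycles d A (n + 1) →ₗ[R] cocycles d (A ⊔ B) (n + 1) :=
    Submodule.inclusion (inf_le_inf_right _ le_sup_left)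
  let iB : cocycles d B (n + 1) →ₗ[R] cocycles d (A ⊔ B) (n + 1) :=
    Submodule.inclusion (inf_le_inf_right _ le_sup_right)
  refine ⟨(equivOfSurj
    ((Submodule.mkQ (((A ⊔ B) n).map (d n)|>.submoduleOf (cocycles d (A ⊔ B) (n + 1)))).comp
      (LinearMap.coprod iA iB))
    (LinearMap.prodMap (Submodule.mkQ _) (Submodule.mkQ _)) ?_ ?_ ?_).choose⟩
  · intro y
    obtain ⟨⟨z, hz, hdz⟩, rfl⟩ := Submodule.mkQ_surjective _ y
    obtain ⟨a, ha, b, hb, rfl⟩ := Submodule.mem_sup.1 hz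
    rw [SetLike.mem_coe, LinearMap.mem_ker, map_add] at hdz
    have e : d (n + 1) a = - d (n + 1) b := eq_neg_of_add_eq_zero_left hdz
    obtain ⟨c, hc, hdc⟩ := h2 (d (n + 1) a)
      ⟨hA _ _ ha, by rw [e]; exact neg_mem (hB _ _ hb)⟩ (dd _ _)
    refine ⟨(⟨a - c, sub_mem ha hc.1, by simp [hdc]⟩,
      ⟨b + c, add_mem hb hc.2, by simp [hdc, e]⟩), ?_⟩
    rw [LinearMap.comp_apply]
    congr 1
    ext
    change (a - c) + (b + c) = a + b
    abel
  · exact Function.Surjective.prodMap (Submodule.mkQ_surjective _) (Submodule.mkQ_surjective _)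
  · rintro ⟨⟨a, ha, hda⟩, ⟨b, hb, hdb⟩⟩
    rw [SetLike.mem_coe, LinearMap.mem_ker] at hda hdb
    rw [LinearMap.comp_apply, mk_eq_zero, LinearMap.prodMap_apply, Prod.mk_eq_zero,
      mk_eq_zero, mk_eq_zero]
    change (∃ y ∈ (A ⊔ B) n, d n y = a + b) ↔ _
    constructor
    · rintro ⟨y, hy, hdy⟩
      obtain ⟨a', ha', b', hb', rfl⟩ := Submodule.mem_sup.1 hy
      rw [map_add] at hdy
      have e : a - d n a' = d n b' - b := by
        rw [sub_eq_sub_iff_add_eq_add, ← hdy]; abel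
      obtain ⟨c, hc, hdc⟩ := h1 (a - d n a')
        ⟨sub_mem ha (hA _ _ ha'), by rw [e]; exact sub_mem (hB _ _ hb') hb⟩
        (by rw [map_sub, hda, dd, sub_zero])
      refine ⟨⟨a' + c, add_mem ha' hc.1, ?_⟩, ⟨b' - c, sub_mem hb' hc.2, ?_⟩⟩
      · rw [map_add, hdc]; abel
      · rw [map_sub, hdc, e]; abel
    · rintro ⟨⟨a', ha', rfl⟩, ⟨b', hb', rfl⟩⟩
      exact ⟨a' + b', Submodule.add_mem_sup ha' hb', map_add _ _ _⟩

/-- Mayer–Vietoris: the connecting map from degree `n + 1` of `A ⊔ B` to degree `n + 2` of `A ⊓ B`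
is an isomorphism if the cohomology of `A` and `B` vanishes in these two degrees. The isomorphism
is obtained by presenting both sides as quotients of the module of pairs `(a, b)` with
`d a + d b = 0`, mapped to the class of `a + b`, resp. of `d a`. -/
theorem coh_sup_equiv_inf {A B : ∀ n, Submodule R (E n)} {n : ℕ} (hA : IsSub d A)
    (hB : IsSub d B) (dd : ∀ n x, d (n + 1) (d n x) = 0)
    (hA0 : Acyclic d A n) (hB0 : Acyclic d B n)
    (hA1 : Acyclic d A (n + 1)) (hB1 : Acyclic d B (n + 1)) :
    Nonempty (Coh d (A ⊔ B) n ≃ₗ[R] Coh d (A ⊓ B) (n + 1)) := by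
  let s : (A (n + 1) × B (n + 1)) →ₗ[R] E (n + 1) :=
    LinearMap.coprod (A (n + 1)).subtype (B (n + 1)).subtype
  let P : Submodule R (A (n + 1) × B (n + 1)) := LinearMap.ker ((d (n + 1)).comp s)
  have key : ∀ x : P, d (n + 1) x.1.1 = - d (n + 1) x.1.2 := by
    intro x
    have := x.2
    rw [LinearMap.mem_ker, LinearMap.comp_apply] at this
    simp only [s, LinearMap.coprod_apply, Submodule.subtype_apply, map_add] at this
    exact eq_neg_of_add_eq_zero_left this
  let p : P →ₗ[R] cocycles d (A ⊔ B) (n + 1) := (s.comp P.subtype).codRestrict _ (by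
    intro x
    exact ⟨Submodule.add_mem_sup x.1.1.2 x.1.2.2, x.2⟩)
  let q : P →ₗ[R] cocycles d (A ⊓ B) (n + 1 + 1) :=
    ((d (n + 1)).comp ((A (n + 1)).subtype.comp
      ((LinearMap.fst R _ _).comp P.subtype))).codRestrict _ (by
    intro x
    refine ⟨⟨hA _ _ x.1.1.2, ?_⟩, dd _ _⟩
    change d (n + 1) x.1.1 ∈ B (n + 1 + 1)
    rw [key]
    exact neg_mem (hB _ _ x.1.2.2))
  have hp : ∀ x : P, (p x : E (n + 1)) = x.1.1 + x.1.2 := fun x => rfl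
  have hq : ∀ x : P, (q x : E (n + 1 + 1)) = d (n + 1) x.1.1 := fun x => rfl
  refine ⟨(equivOfSurj ((Submodule.mkQ _).comp p) ((Submodule.mkQ _).comp q)
    ?_ ?_ ?_).choose⟩
  · apply (Submodule.mkQ_surjective _).comp
    rintro ⟨z, hz, hdz⟩
    obtain ⟨a, ha, b, hb, rfl⟩ := Submodule.mem_sup.1 hz
    exact ⟨⟨(⟨a, ha⟩, ⟨b, hb⟩), hdz⟩, rfl⟩
  · apply (Submodule.mkQ_surjective _).comp
    rintro ⟨z, hz, hdz⟩
    rw [SetLike.mem_coe, LinearMap.mem_ker] at hdz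
    obtain ⟨a, ha, ea⟩ := hA1 z hz.1 hdz
    obtain ⟨b, hb, eb⟩ := hB1 z hz.2 hdz
    refine ⟨⟨(⟨a, ha⟩, ⟨-b, neg_mem hb⟩), ?_⟩, Subtype.ext ea⟩
    rw [LinearMap.mem_ker, LinearMap.comp_apply]
    simp [s, ea, eb]
  · intro x
    rw [LinearMap.comp_apply, LinearMap.comp_apply, mk_eq_zero, mk_eq_zero, hp, hq]
    have hx := key x
    obtain ⟨⟨⟨a, ha⟩, ⟨b, hb⟩⟩, hx'⟩ := x
    simp only at hx ⊢
    constructor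
    · rintro ⟨y, hy, hdy⟩
      obtain ⟨a', ha', b', hb', rfl⟩ := Submodule.mem_sup.1 hy
      rw [map_add] at hdy
      have e : a - d n a' = d n b' - b := by
        rw [sub_eq_sub_iff_add_eq_add, ← hdy]; abel
      refine ⟨a - d n a', ⟨sub_mem ha (hA _ _ ha'), ?_⟩, by rw [map_sub, dd, sub_zero]⟩
      rw [e]; exact sub_mem (hB _ _ hb') hb
    · rintro ⟨c, hc, hdc⟩
      obtain ⟨a', ha', ea⟩ := hA0 (a - c) (sub_mem ha hc.1) (by rw [map_sub, hdc, sub_self])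
      obtain ⟨b', hb', eb⟩ := hB0 (b + c) (add_mem hb hc.2)
        (by rw [map_add, hdc, hx, add_neg_cancel])
      exact ⟨a' + b', Submodule.add_mem_sup ha' hb', by rw [map_add, ea, eb]; abel⟩

/-- The injectivity half of `coh_sup₃_equiv`: if the sum of cocycles of `A ⊔ B`, `A ⊔ C` and
`B ⊔ C` bounds in `A ⊔ B ⊔ C`, then the second cocycle bounds in `A ⊔ C`. -/
theorem bounds_of_sum_bounds {A B C : ∀ n, Submodule R (E n)} {n : ℕ} (hA : IsSub d A)
    (hB : IsSub d B) (hC : IsSub d C) (dd : ∀ n x, d (n + 1) (d n x) = 0)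
    (hdist : (A ⊔ B) ⊓ C ≤ (A ⊓ C) ⊔ (B ⊓ C))
    (hA0 : Acyclic d A n) (hC0 : Acyclic d C n)
    (h1 : Acyclic d (A ⊓ B ⊓ C) (n + 1))
    {x y z : E (n + 1)} (hx : x ∈ (A ⊔ B) (n + 1))
    (hy : y ∈ (A ⊔ C) (n + 1)) (hz : z ∈ (B ⊔ C) (n + 1))
    (hdy : d (n + 1) y = 0) (hdz : d (n + 1) z = 0)
    (hw : ∃ w ∈ (A ⊔ B ⊔ C) n, d n w = x + y + z) :
    ∃ w ∈ (A ⊔ C) n, d n w = y := by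
  obtain ⟨w, hw, hdw⟩ := hw
  obtain ⟨ab, hab, c, hc, rfl⟩ := Submodule.mem_sup.1 hw
  obtain ⟨y₁, hy₁, y₃, hy₃, rfl⟩ := Submodule.mem_sup.1 hy
  obtain ⟨z₂, hz₂, z₃, hz₃, rfl⟩ := Submodule.mem_sup.1 hz
  rw [map_add] at hdw hdy hdz
  have e : y₃ + z₃ - d n c = d n ab - x - y₁ - z₂ := by
    have : d n ab = x + (y₁ + y₃) + (z₂ + z₃) - d n c := eq_sub_of_add_eq hdw
    rw [this]; abel
  have mem : y₃ + z₃ - d n c ∈ ((A ⊔ B) ⊓ C) (n + 1) := by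
    refine ⟨?_, sub_mem (add_mem hy₃ hz₃) (hC _ _ hc)⟩
    rw [e]
    refine sub_mem (sub_mem (sub_mem (hA.sup hB _ _ hab) hx) ?_) ?_
    · exact Submodule.mem_sup_left hy₁
    · exact Submodule.mem_sup_right hz₂
  obtain ⟨u, hu, v, hv, huv⟩ := Submodule.mem_sup.1 (hdist _ mem)
  have e2 : d (n + 1) (y₃ - u) = d (n + 1) (v - z₃) := by
    have := congrArg (d (n + 1)) huv
    simp only [map_add, map_sub, dd, sub_zero] at this ⊢
    rw [sub_eq_sub_iff_add_eq_add, ← this]; abel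
  have dy : d (n + 1) y₃ = - d (n + 1) y₁ := eq_neg_of_add_eq_zero_right hdy
  have dz : d (n + 1) z₃ = - d (n + 1) z₂ := eq_neg_of_add_eq_zero_right hdz
  obtain ⟨t, ht, hdt⟩ := h1 (d (n + 1) (y₃ - u))
    ⟨⟨by
      rw [map_sub, dy]
      exact sub_mem (neg_mem (hA _ _ hy₁)) (hA _ _ hu.1), by
      rw [e2, map_sub, dz]
      exact sub_mem (hB _ _ hv.1) (neg_mem (hB _ _ hz₂))⟩,
      hC _ _ (sub_mem hy₃ hu.2)⟩ (dd _ _)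
  obtain ⟨p, hp, hdp⟩ := hC0 (y₃ - u - t) (sub_mem (sub_mem hy₃ hu.2) ht.2)
    (by rw [map_sub, hdt, sub_self])
  obtain ⟨q, hq, hdq⟩ := hA0 (y₁ + u + t) (add_mem (add_mem hy₁ hu.1) ht.1.1)
    (by rw [map_add, hdt, map_add, map_sub, dy]; abel)
  exact ⟨q + p, Submodule.add_mem_sup hq hp, by rw [map_add, hdp, hdq]; abel⟩

/-- The cohomology of `A ⊔ B ⊔ C` is the direct sum of those of the pairwise sums in a degree
`n + 1` where `A`, `B`, `C` are acyclic in degrees `n + 1` and `n + 2`, and `A ⊓ B ⊓ C` is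
acyclic in degrees `n + 2` and `n + 3`. -/
theorem coh_sup₃_equiv {A B C : ∀ n, Submodule R (E n)} {n : ℕ} (hA : IsSub d A)
    (hB : IsSub d B) (hC : IsSub d C) (dd : ∀ n x, d (n + 1) (d n x) = 0)
    (hdist₁ : (B ⊔ C) ⊓ A ≤ (B ⊓ A) ⊔ (C ⊓ A))
    (hdist₂ : (C ⊔ A) ⊓ B ≤ (C ⊓ B) ⊔ (A ⊓ B))
    (hdist₃ : (A ⊔ B) ⊓ C ≤ (A ⊓ C) ⊔ (B ⊓ C))
    (hA0 : Acyclic d A n) (hB0 : Acyclic d B n) (hC0 : Acyclic d C n)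
    (hA1 : Acyclic d A (n + 1)) (hB1 : Acyclic d B (n + 1)) (hC1 : Acyclic d C (n + 1))
    (h1 : Acyclic d (A ⊓ B ⊓ C) (n + 1)) (h2 : Acyclic d (A ⊓ B ⊓ C) (n + 1 + 1)) :
    Nonempty (Coh d (A ⊔ B ⊔ C) n ≃ₗ[R]
      Coh d (A ⊔ B) n × Coh d (A ⊔ C) n × Coh d (B ⊔ C) n) := by
  have l1 : A ⊔ B ≤ A ⊔ B ⊔ C := le_sup_left
  have l2 : A ⊔ C ≤ A ⊔ B ⊔ C := sup_le (le_sup_left.trans le_sup_left) le_sup_right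
  have l3 : B ⊔ C ≤ A ⊔ B ⊔ C := sup_le (le_sup_right.trans le_sup_left) le_sup_right
  let i₁ : cocycles d (A ⊔ B) (n + 1) →ₗ[R] cocycles d (A ⊔ B ⊔ C) (n + 1) :=
    Submodule.inclusion (inf_le_inf_right _ (l1 _))
  let i₂ : cocycles d (A ⊔ C) (n + 1) →ₗ[R] cocycles d (A ⊔ B ⊔ C) (n + 1) :=
    Submodule.inclusion (inf_le_inf_right _ (l2 _))
  let i₃ : cocycles d (B ⊔ C) (n + 1) →ₗ[R] cocycles d (A ⊔ B ⊔ C) (n + 1) :=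
    Submodule.inclusion (inf_le_inf_right _ (l3 _))
  refine ⟨(equivOfSurj
    ((Submodule.mkQ (((A ⊔ B ⊔ C) n).map (d n)|>.submoduleOf
      (cocycles d (A ⊔ B ⊔ C) (n + 1)))).comp
      (LinearMap.coprod i₁ (LinearMap.coprod i₂ i₃)))
    (LinearMap.prodMap (Submodule.mkQ _) (LinearMap.prodMap (Submodule.mkQ _) (Submodule.mkQ _)))
    ?_ ?_ ?_).choose⟩
  · intro y
    obtain ⟨⟨z, hz, hdz⟩, rfl⟩ := Submodule.mkQ_surjective _ y
    obtain ⟨ab, hab, c, hc, rfl⟩ := Submodule.mem_sup.1 hz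
    rw [SetLike.mem_coe, LinearMap.mem_ker, map_add] at hdz
    have e : d (n + 1) c = - d (n + 1) ab := eq_neg_of_add_eq_zero_right hdz
    obtain ⟨u, hu, v, hv, huv⟩ := Submodule.mem_sup.1 (hdist₃ _
      (show d (n + 1) c ∈ ((A ⊔ B) ⊓ C) (n + 1 + 1) from
        ⟨by rw [e]; exact neg_mem (hA.sup hB _ _ hab), hC _ _ hc⟩))
    have e2 : d (n + 1 + 1) u = - d (n + 1 + 1) v := by
      have := congrArg (d (n + 1 + 1)) huv
      rw [dd, map_add] at this
      exact eq_neg_of_add_eq_zero_left this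
    obtain ⟨w, hw, hdw⟩ := h2 (d (n + 1 + 1) u)
      ⟨⟨hA _ _ hu.1, by rw [e2]; exact neg_mem (hB _ _ hv.1)⟩, hC _ _ hu.2⟩ (dd _ _)
    have cu : d (n + 1 + 1) (u - w) = 0 := by rw [map_sub, hdw, sub_self]
    have cv : d (n + 1 + 1) (v + w) = 0 := by rw [map_add, hdw, e2, add_neg_cancel]
    obtain ⟨p₁, hp₁, ep₁⟩ := hA1 (u - w) (sub_mem hu.1 hw.1.1) cu
    obtain ⟨p₃, hp₃, ep₃⟩ := hC1 (u - w) (sub_mem hu.2 hw.2) cu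
    obtain ⟨q₂, hq₂, eq₂⟩ := hB1 (v + w) (add_mem hv.1 hw.1.2) cv
    obtain ⟨q₃, hq₃, eq₃⟩ := hC1 (v + w) (add_mem hv.2 hw.2) cv
    have dc : d (n + 1) c = d (n + 1) p₃ + d (n + 1) q₃ := by
      rw [ep₃, eq₃, ← huv]; abel
    obtain ⟨h, hh, eh⟩ := hC0 (c - p₃ - q₃) (sub_mem (sub_mem hc hp₃) hq₃)
      (by rw [map_sub, map_sub, dc]; abel)
    refine ⟨(⟨ab + p₁ + q₂, ?_, ?_⟩, ⟨p₃ - p₁, ?_, ?_⟩, ⟨q₃ - q₂, ?_, ?_⟩), ?_⟩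
    · exact add_mem (add_mem hab (Submodule.mem_sup_left hp₁)) (Submodule.mem_sup_right hq₂)
    · rw [SetLike.mem_coe, LinearMap.mem_ker, map_add, map_add, ep₁, ← ep₃, eq₂, ← eq₃,
        add_assoc (d (n + 1) ab), ← dc, hdz]
    · exact sub_mem (Submodule.mem_sup_right hp₃) (Submodule.mem_sup_left hp₁)
    · rw [SetLike.mem_coe, LinearMap.mem_ker, map_sub, ep₁, ep₃, sub_self]
    · exact sub_mem (Submodule.mem_sup_right hq₃) (Submodule.mem_sup_left hq₂)
    · rw [SetLike.mem_coe, LinearMap.mem_ker, map_sub, eq₂, eq₃, sub_self]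
    · rw [LinearMap.comp_apply, ← sub_eq_zero, ← map_sub, mk_eq_zero]
      refine ⟨-h, neg_mem (Submodule.mem_sup_right hh), ?_⟩
      rw [map_neg, eh]
      change _ = (ab + p₁ + q₂) + ((p₃ - p₁) + (q₃ - q₂)) - (ab + c)
      abel
  · exact Function.Surjective.prodMap (Submodule.mkQ_surjective _)
      (Function.Surjective.prodMap (Submodule.mkQ_surjective _) (Submodule.mkQ_surjective _))
  · rintro ⟨⟨x, hx, hdx⟩, ⟨y, hy, hdy⟩, ⟨z, hz, hdz⟩⟩
    rw [SetLike.mem_coe, LinearMap.mem_ker] at hdx hdy hdz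
    rw [LinearMap.comp_apply, mk_eq_zero, LinearMap.prodMap_apply, Prod.mk_eq_zero,
      LinearMap.prodMap_apply, Prod.mk_eq_zero, mk_eq_zero, mk_eq_zero, mk_eq_zero]
    change (∃ w ∈ (A ⊔ B ⊔ C) n, d n w = x + (y + z)) ↔ _
    constructor
    · rintro ⟨w, hw, hdw⟩
      refine ⟨?_, ?_, ?_⟩
      · -- the roles of `(A, B, C)` are played by `(B, C, A)`
        have := bounds_of_sum_bounds hB hC hA dd hdist₁ hB0 hA0
          (by rwa [inf_comm, ← inf_assoc]) (x := z) (y := x) (z := y)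
          hz (by rwa [sup_comm]) (by rwa [sup_comm]) hdx hdy
          ⟨w, by rwa [sup_comm, ← sup_assoc], by rw [hdw]; abel⟩
        rwa [sup_comm] at this
      · exact bounds_of_sum_bounds hA hB hC dd hdist₃ hA0 hC0 h1 hx hy hz hdy hdz
          ⟨w, hw, by rw [hdw]; abel⟩
      · -- the roles of `(A, B, C)` are played by `(C, A, B)`
        have := bounds_of_sum_bounds hC hA hB dd hdist₂ hC0 hB0
          (by rwa [inf_assoc, inf_comm]) (x := y) (y := z) (z := x)
          (by rwa [sup_comm]) (by rwa [sup_comm]) hx hdz hdx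
          ⟨w, by rwa [sup_assoc, sup_comm], by rw [hdw]; abel⟩
        rwa [sup_comm] at this
    · rintro ⟨⟨a', ha', rfl⟩, ⟨b', hb', rfl⟩, ⟨c', hc', rfl⟩⟩
      exact ⟨a' + (b' + c'), add_mem (l1 _ ha') (add_mem (l2 _ hb') (l3 _ hc')), by simp⟩

end Homological

/-! ### Power torsion in injective modules -/

section Torsion

variable {R : Type*} [CommRing R]

/-- The submodule of elements of `N` that are killed by some power of `J`. -/
def Gam (J : Ideal R) (N : Type*) [AddCommGroup N] [Module R N] : Submodule R N where
  carrier := {z | ∃ t : ℕ, ∀ r ∈ J ^ t, r • z = 0}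
  zero_mem' := ⟨0, fun r _ => smul_zero r⟩
  add_mem' := by
    rintro a b ⟨s, hs⟩ ⟨t, ht⟩
    refine ⟨max s t, fun r hr => ?_⟩
    rw [smul_add, hs r (Ideal.pow_le_pow_right (le_max_left _ _) hr),
      ht r (Ideal.pow_le_pow_right (le_max_right _ _) hr), add_zero]
  smul_mem' := by
    rintro c a ⟨s, hs⟩
    exact ⟨s, fun r hr => by rw [smul_comm, hs r hr, smul_zero]⟩

variable {N : Type*} [AddCommGroup N] [Module R N]

theorem mem_gam {J : Ideal R} {z : N} : z ∈ Gam J N ↔ ∃ t : ℕ, ∀ r ∈ J ^ t, r • z = 0 := Iff.rfl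

theorem gam_anti {I J : Ideal R} (h : I ≤ J) : Gam J N ≤ Gam I N := by
  rintro z ⟨t, ht⟩
  exact ⟨t, fun r hr => ht r (Ideal.pow_right_mono h t hr)⟩

theorem gam_add (I J : Ideal R) : Gam (I + J) N = Gam I N ⊓ Gam J N := by
  refine le_antisymm (le_inf (gam_anti le_sup_left) (gam_anti le_sup_right)) ?_
  rintro z ⟨⟨s, hs⟩, ⟨t, ht⟩⟩
  refine ⟨s + t, fun r hr => ?_⟩
  have hr' : r ∈ I ^ s ⊔ J ^ t := Ideal.sup_pow_add_le_pow_sup_pow hr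
  obtain ⟨a, ha, b, hb, rfl⟩ := Submodule.mem_sup.1 hr'
  rw [add_smul, hs a ha, ht b hb, add_zero]

/-- An element of an injective module killed by `I ⊓ J` is the sum of an element killed by `I` and
one killed by `J`: extend the map `R/(I ⊓ J) → N` it defines along the embedding
`R/(I ⊓ J) → R/I × R/J`. -/
theorem exists_add_of_inf {R N : Type u} [CommRing R] [AddCommGroup N] [Module R N]
    [Module.Injective R N] (I J : Ideal R) (z : N)
    (hz : ∀ r ∈ I ⊓ J, r • z = 0) :
    ∃ a b : N, (∀ r ∈ I, r • a = 0) ∧ (∀ r ∈ J, r • b = 0) ∧ a + b = z := by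
  let f : (R ⧸ I ⊓ J) →ₗ[R] (R ⧸ I) × (R ⧸ J) :=
    LinearMap.prod (Submodule.mapQ _ _ LinearMap.id inf_le_left)
      (Submodule.mapQ _ _ LinearMap.id inf_le_right)
  have hf : Function.Injective f := by
    rw [← LinearMap.ker_eq_bot, LinearMap.ker_eq_bot']
    intro x hx
    obtain ⟨r, rfl⟩ := Submodule.mkQ_surjective _ x
    obtain ⟨h1, h2⟩ := Prod.mk.inj hx
    rw [Submodule.mkQ_apply, Submodule.Quotient.mk_eq_zero]
    exact ⟨(Submodule.Quotient.mk_eq_zero _).1 h1, (Submodule.Quotient.mk_eq_zero _).1 h2⟩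
  let g : (R ⧸ I ⊓ J) →ₗ[R] N := Submodule.liftQ _ (LinearMap.toSpanSingleton R N z)
    (fun r hr => by rw [LinearMap.mem_ker, LinearMap.toSpanSingleton_apply]; exact hz r hr)
  obtain ⟨h, hh⟩ := Module.Injective.out f hf g
  refine ⟨h (Submodule.Quotient.mk 1, 0), h (0, Submodule.Quotient.mk 1), ?_, ?_, ?_⟩
  · intro r hr
    rw [← map_smul, Prod.smul_mk, smul_zero, ← Submodule.Quotient.mk_smul, smul_eq_mul, mul_one,
      (Submodule.Quotient.mk_eq_zero _).2 hr]
    exact map_zero _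
  · intro r hr
    rw [← map_smul, Prod.smul_mk, smul_zero, ← Submodule.Quotient.mk_smul, smul_eq_mul, mul_one,
      (Submodule.Quotient.mk_eq_zero _).2 hr]
    exact map_zero _
  · rw [← map_add, Prod.mk_add_mk, add_zero, zero_add]
    refine (hh (Submodule.Quotient.mk 1)).trans ?_
    change (1 : R) • z = z
    exact one_smul _ _

/-- Over a Noetherian ring the powers of `I * J` and the ideals `I ^ n ⊓ J ^ n` are cofinal, by
Artin–Rees. -/
theorem exists_inf_pow_le [IsNoetherianRing R] (I J : Ideal R) (s : ℕ) :
    ∃ n, I ^ n ⊓ J ^ n ≤ (I * J) ^ s := by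
  obtain ⟨c, hc⟩ := Ideal.exists_pow_inf_eq_pow_smul I (J ^ s : Ideal R)
  refine ⟨c + s, ?_⟩
  have h := hc (c + s) (Nat.le_add_right _ _)
  rw [Nat.add_sub_cancel_left, smul_eq_mul, Ideal.mul_top] at h
  calc I ^ (c + s) ⊓ J ^ (c + s) ≤ I ^ (c + s) ⊓ J ^ s :=
        inf_le_inf_left _ (Ideal.pow_le_pow_right (Nat.le_add_left _ _))
    _ = I ^ s * (I ^ c • ⊤ ⊓ J ^ s) := by rw [h, smul_eq_mul]
    _ ≤ I ^ s * J ^ s := Ideal.mul_mono_right inf_le_right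
    _ = (I * J) ^ s := (mul_pow _ _ _).symm

theorem gam_mul {R N : Type u} [CommRing R] [IsNoetherianRing R] [AddCommGroup N] [Module R N]
    [Module.Injective R N] (I J : Ideal R) : Gam (I * J) N = Gam I N ⊔ Gam J N := by
  refine le_antisymm ?_ (sup_le (gam_anti (Ideal.mul_le_inf.trans inf_le_left))
    (gam_anti (Ideal.mul_le_inf.trans inf_le_right)))
  rintro z ⟨s, hs⟩
  obtain ⟨n, hn⟩ := exists_inf_pow_le I J s
  obtain ⟨a, b, ha, hb, rfl⟩ := exists_add_of_inf (I ^ n) (J ^ n) z (fun r hr => hs r (hn hr))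
  exact Submodule.add_mem_sup ⟨n, ha⟩ ⟨n, hb⟩

/-- The submodules `Gam J N` satisfy the distributive law needed for three subcomplexes, because
`(I + K) * (J + K) ≤ I * J + K`. -/
theorem gam_dist {R N : Type u} [CommRing R] [IsNoetherianRing R] [AddCommGroup N] [Module R N]
    [Module.Injective R N] (I J K : Ideal R) :
    (Gam I N ⊔ Gam J N) ⊓ Gam K N ≤ (Gam I N ⊓ Gam K N) ⊔ (Gam J N ⊓ Gam K N) := by
  rw [← gam_mul, ← gam_add, ← gam_add, ← gam_add, ← gam_mul]
  apply gam_anti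
  rw [add_mul, mul_add]
  have h₁ : I * K ≤ I * J + K := (Ideal.mul_le_inf.trans inf_le_right).trans le_sup_right
  have h₂ : K * (J + K) ≤ I * J + K := (Ideal.mul_le_inf.trans inf_le_left).trans le_sup_right
  exact sup_le (sup_le le_sup_left h₁) h₂

end Torsion

/-! ### Ext of quotients by powers of variables, and acyclicity -/

section Ext

open CategoryTheory Abelian

variable {R : Type u} [CommRing R]

/-- `Ext^i(R/J, R)` is zero for `i ≠ r` and isomorphic to `R/J` for `i = r`. -/
def ExtConcentrated (J : Ideal R) (r : ℕ) : Prop :=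
  (∀ i, i ≠ r → ∀ e : Ext (ModuleCat.of R (R ⧸ J)) (ModuleCat.of R R) i, e = 0) ∧
    Nonempty (Ext (ModuleCat.of R (R ⧸ J)) (ModuleCat.of R R) r ≃ₗ[R] (R ⧸ J))

theorem extConcentrated_bot : ExtConcentrated (⊥ : Ideal R) 0 := by
  let e : (R ⧸ (⊥ : Ideal R)) ≃ₗ[R] R := Submodule.quotEquivOfEqBot _ rfl
  have : Module.Projective R (R ⧸ (⊥ : Ideal R)) := Module.Projective.of_equiv e.symm
  have : Projective (ModuleCat.of R (R ⧸ (⊥ : Ideal R))) := inferInstance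
  constructor
  · intro i hi x
    obtain ⟨i, rfl⟩ := Nat.exists_eq_succ_of_ne_zero hi
    exact Ext.eq_zero_of_projective x
  · exact ⟨Ext.linearEquiv₀ (R := R) ≪≫ₗ ModuleCat.homLinearEquiv ≪≫ₗ
      LinearEquiv.congrLeft R R e ≪≫ₗ LinearMap.ringLmapEquivSelf R R R ≪≫ₗ e.symm⟩

/-- Multiplication by `x` and the projection, `R/J → R/J → R/(J + (x))`. -/
noncomputable abbrev mulComplex (J : Ideal R) (x : R) : ShortComplex (ModuleCat.{u} R) where
  X₁ := ModuleCat.of R (R ⧸ J)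
  X₂ := ModuleCat.of R (R ⧸ J)
  X₃ := ModuleCat.of R (R ⧸ (J ⊔ Ideal.span {x}))
  f := x • 𝟙 _
  g := ModuleCat.ofHom (Submodule.mapQ _ _ LinearMap.id le_sup_left)
  zero := by
    refine ModuleCat.hom_ext (LinearMap.ext fun y => ?_)
    obtain ⟨a, rfl⟩ := Submodule.mkQ_surjective _ y
    change (Submodule.Quotient.mk (x * a) : R ⧸ (J ⊔ Ideal.span {x})) = 0
    rw [Submodule.Quotient.mk_eq_zero]
    exact Ideal.mul_mem_right _ _ (Ideal.mem_sup_right (Ideal.mem_span_singleton_self x))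

theorem mulComplex_shortExact (J : Ideal R) (x : R) (hx : ∀ a, x * a ∈ J → a ∈ J) :
    (mulComplex J x).ShortExact := by
  refine ShortComplex.ShortExact.mk' ?_ ?_ ?_
  · rw [ShortComplex.moduleCat_exact_iff]
    intro y hy
    obtain ⟨a, rfl⟩ := Submodule.mkQ_surjective _ y
    have ha : a ∈ J ⊔ Ideal.span {x} := (Submodule.Quotient.mk_eq_zero _).1 hy
    obtain ⟨j, hj, b, hb, rfl⟩ := Submodule.mem_sup.1 ha
    obtain ⟨c, rfl⟩ := Ideal.mem_span_singleton'.1 hb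
    refine ⟨Submodule.Quotient.mk c, ?_⟩
    change (Submodule.Quotient.mk (x * c) : R ⧸ J) = Submodule.Quotient.mk (j + c * x)
    rw [Submodule.Quotient.eq]
    convert J.neg_mem hj using 1
    ring
  · rw [ModuleCat.mono_iff_injective, injective_iff_map_eq_zero]
    intro y hy
    obtain ⟨a, rfl⟩ := Submodule.mkQ_surjective _ y
    exact (Submodule.Quotient.mk_eq_zero _).2 (hx a ((Submodule.Quotient.mk_eq_zero _).1 hy))
  · rw [ModuleCat.epi_iff_surjective]
    intro y
    obtain ⟨a, rfl⟩ := Submodule.mkQ_surjective _ y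
    exact ⟨Submodule.Quotient.mk a, rfl⟩

theorem smul_id_comp {A B : ModuleCat.{u} R} {n : ℕ} (x : R) (e : Ext A B n) :
    (Ext.mk₀ (x • 𝟙 A)).comp e (zero_add n) = x • e := by
  rw [Ext.mk₀_smul, Ext.smul_comp, Ext.mk₀_id_comp]

/-- The inductive step of the computation of `Ext^i(R/J, R)` for an ideal `J` generated by a regular
sequence. -/
theorem ExtConcentrated.step {J : Ideal R} {r : ℕ} (h : ExtConcentrated J r) (x : R)
    (hx : ∀ a, x * a ∈ J → a ∈ J) : ExtConcentrated (J ⊔ Ideal.span {x}) (r + 1) := by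
  obtain ⟨h0, ⟨φ⟩⟩ := h
  have hS := mulComplex_shortExact J x hx
  let Y := ModuleCat.of R R
  have reg : ∀ i, ∀ e : Ext (ModuleCat.of R (R ⧸ J)) Y i, x • e = 0 → e = 0 := by
    intro i e he
    by_cases hi : i = r
    · subst hi
      have : x • φ e = 0 := by rw [← map_smul, he, map_zero]
      obtain ⟨a, ha⟩ := Submodule.mkQ_surjective _ (φ e)
      rw [← ha] at this
      have ha' : a ∈ J := hx a ((Submodule.Quotient.mk_eq_zero _).1 this)
      rw [← LinearEquiv.map_eq_zero_iff φ, ← ha]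
      exact (Submodule.Quotient.mk_eq_zero _).2 ha'
    · exact h0 i hi e
  have hg : ∀ i, ∀ e : Ext (ModuleCat.of R (R ⧸ (J ⊔ Ideal.span {x}))) Y i,
      (Ext.mk₀ (mulComplex J x).g).comp e (zero_add i) = 0 := by
    intro i e
    apply reg
    rw [← smul_id_comp, Ext.mk₀_comp_mk₀_assoc]
    change (Ext.mk₀ ((mulComplex J x).f ≫ (mulComplex J x).g)).comp e _ = 0
    rw [(mulComplex J x).zero, Ext.mk₀_zero, Ext.zero_comp]
  constructor
  · intro i hi e
    rcases i with _ | i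
    · obtain ⟨f, rfl⟩ := (Ext.mk₀_bijective _ _).2 e
      have := hg 0 (Ext.mk₀ f)
      rw [Ext.mk₀_comp_mk₀, Ext.mk₀_eq_zero_iff] at this
      have := hS.epi_g
      rw [Ext.mk₀_eq_zero_iff]
      exact Limits.zero_of_epi_comp (mulComplex J x).g ‹_›
    · obtain ⟨y, rfl⟩ := Ext.contravariant_sequence_exact₃ hS Y e (hg _ e) (n₀ := i) (by omega)
      rw [show y = 0 from h0 i (by omega) y, Ext.comp_zero]
  · let δ : Ext (ModuleCat.of R (R ⧸ J)) Y r →ₗ[R]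
        Ext (ModuleCat.of R (R ⧸ (J ⊔ Ideal.span {x}))) Y (r + 1) :=
      hS.extClass.precompOfLinear R Y (by omega)
    have hδ : ∀ y, δ y = hS.extClass.comp y (by omega) := fun y => rfl
    refine ⟨(equivOfSurj (R := R) (P := R)
      (δ.comp (φ.symm.toLinearMap.comp (Submodule.mkQ J)))
      (Submodule.mkQ (J ⊔ Ideal.span {x})) ?_ (Submodule.mkQ_surjective _) ?_).choose⟩
    · have hs : Function.Surjective δ := fun e =>
        Ext.contravariant_sequence_exact₃ hS Y e (hg _ e) (n₀ := r) (by omega)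
      exact hs.comp (φ.symm.surjective.comp (Submodule.mkQ_surjective _))
    · intro a
      rw [Submodule.mkQ_apply, Submodule.Quotient.mk_eq_zero]
      constructor
      · intro ha
        obtain ⟨w, hw⟩ := Ext.contravariant_sequence_exact₁ hS Y _ (by omega) ha
        change (Ext.mk₀ (x • 𝟙 (ModuleCat.of R (R ⧸ J)))).comp w _ =
          φ.symm (Submodule.Quotient.mk a) at hw
        rw [smul_id_comp, LinearEquiv.eq_symm_apply, map_smul] at hw
        obtain ⟨b, hb⟩ := Submodule.mkQ_surjective _ (φ w)
        rw [← hb] at hw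
        have : x * b - a ∈ J := (Submodule.Quotient.eq _).1 hw
        have e : a = x * b - (x * b - a) := by ring
        rw [e]
        exact sub_mem (Ideal.mul_mem_right _ _
          (Ideal.mem_sup_right (Ideal.mem_span_singleton_self x))) (Ideal.mem_sup_left this)
      · intro ha
        obtain ⟨j, hj, b, hb, rfl⟩ := Submodule.mem_sup.1 ha
        obtain ⟨c, rfl⟩ := Ideal.mem_span_singleton'.1 hb
        have e : (Submodule.mkQ J) (j + c * x) = x • Submodule.mkQ J c := by
          rw [map_add, Submodule.mkQ_apply, (Submodule.Quotient.mk_eq_zero _).2 hj, zero_add,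
            mul_comm, ← smul_eq_mul, map_smul]
        rw [LinearMap.comp_apply, LinearMap.comp_apply, e, map_smul, LinearEquiv.coe_coe, hδ,
          ← smul_id_comp]
        exact hS.extClass_comp_assoc _

/-- The ideal generated by the `t`-th powers of the variables in `S`. -/
noncomputable def powIdeal {k σ : Type u} [Field k] (t : ℕ) (S : Finset σ) :
    Ideal (MvPolynomial σ k) :=
  Ideal.span ((fun s => X s ^ t) '' S)

theorem mem_powIdeal {k σ : Type u} [Field k] {t : ℕ} {S : Finset σ} {p : MvPolynomial σ k} :
    p ∈ powIdeal t S ↔ ∀ m ∈ p.support, ∃ s ∈ S, t ≤ m s := by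
  have h : (fun s : σ => (X s ^ t : MvPolynomial σ k)) '' S =
      (fun m => monomial m (1 : k)) '' ((fun s => Finsupp.single s t) '' S) := by
    rw [Set.image_image]
    simp only [X_pow_eq_monomial]
  rw [powIdeal, h, mem_ideal_span_monomial_image]
  simp

theorem extConcentrated_powIdeal {k σ : Type u} [Field k] (t : ℕ) (S : Finset σ) :
    ExtConcentrated (powIdeal t S : Ideal (MvPolynomial σ k)) S.card := by
  classical
  induction S using Finset.induction_on with
  | empty =>
    have : (powIdeal t ∅ : Ideal (MvPolynomial σ k)) = ⊥ := by simp [powIdeal]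
    rw [this]
    exact extConcentrated_bot
  | insert j S hj ih =>
    have : (powIdeal t (insert j S) : Ideal (MvPolynomial σ k)) =
        powIdeal t S ⊔ Ideal.span {X j ^ t} := by
      rw [powIdeal, Finset.coe_insert, Set.image_insert_eq, Ideal.span_insert, sup_comm, powIdeal]
    rw [this, Finset.card_insert_of_notMem hj]
    refine ih.step _ fun a ha => ?_
    rw [mem_powIdeal] at ha ⊢
    intro m hm
    obtain ⟨s, hs, hst⟩ := ha (Finsupp.single j t + m) (by
      rw [mem_support_iff, X_pow_eq_monomial, coeff_monomial_mul, one_mul]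
      exact mem_support_iff.1 hm)
    refine ⟨s, hs, ?_⟩
    rwa [Finsupp.add_apply, Finsupp.single_eq_of_ne (by rintro rfl; exact hj hs), zero_add] at hst

/-- The homomorphism `R/J → N` sending `1` to an element `z` killed by `J`. -/
def homOf {J : Ideal R} {N : ModuleCat.{u} R} (z : N) (hz : ∀ r ∈ J, r • z = 0) :
    ModuleCat.of R (R ⧸ J) ⟶ N :=
  ModuleCat.ofHom (Submodule.liftQ _ (LinearMap.toSpanSingleton R N z) fun r hr => by
    rw [LinearMap.mem_ker, LinearMap.toSpanSingleton_apply]; exact hz r hr)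

theorem homOf_mk {J : Ideal R} {N : ModuleCat.{u} R} (z : N) (hz : ∀ r ∈ J, r • z = 0) (a : R) :
    (homOf z hz).hom (Submodule.Quotient.mk a) = a • z := rfl

theorem quot_hom_ext {J : Ideal R} {N : ModuleCat.{u} R} {f g : ModuleCat.of R (R ⧸ J) ⟶ N}
    (h : f.hom (Submodule.Quotient.mk 1) = g.hom (Submodule.Quotient.mk 1)) : f = g := by
  refine ModuleCat.hom_ext (LinearMap.ext fun y => ?_)
  obtain ⟨a, rfl⟩ := Submodule.mkQ_surjective _ y
  have e : Submodule.mkQ J a = a • (Submodule.Quotient.mk 1 : R ⧸ J) := by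
    rw [← Submodule.Quotient.mk_smul, smul_eq_mul, mul_one]; rfl
  rw [e]
  exact (f.hom.map_smul a _).trans ((congrArg (a • ·) h).trans (g.hom.map_smul a _).symm)

theorem smul_hom_one {J : Ideal R} {N : ModuleCat.{u} R} (f : ModuleCat.of R (R ⧸ J) ⟶ N)
    {r : R} (hr : r ∈ J) : r • f.hom (Submodule.Quotient.mk 1) = 0 := by
  have e : r • (Submodule.Quotient.mk 1 : R ⧸ J) = 0 := by
    rw [← Submodule.Quotient.mk_smul, smul_eq_mul, mul_one, Submodule.Quotient.mk_eq_zero]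
    exact hr
  exact (f.hom.map_smul r _).symm.trans ((congrArg f.hom e).trans (map_zero _))

variable {M : ModuleCat.{u} R} (I : InjectiveResolution M)

/-- The differentials of an injective resolution as linear maps. -/
abbrev diff (n : ℕ) : I.cocomplex.X n →ₗ[R] I.cocomplex.X (n + 1) :=
  (I.cocomplex.d n (n + 1)).hom

theorem diff_diff (n : ℕ) (x : I.cocomplex.X n) : diff I (n + 1) (diff I n x) = 0 :=
  congrArg (fun f => f.hom x) (I.cocomplex.d_comp_d n (n + 1) (n + 1 + 1))

/-- The subcomplex of `J`-power torsion elements of an injective resolution; its cohomology is local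
cohomology. -/
abbrev GamC (J : Ideal R) (n : ℕ) : Submodule R (I.cocomplex.X n) := Gam J (I.cocomplex.X n)

theorem isSub_gamC (J : Ideal R) : IsSub (diff I) (GamC I J) := by
  rintro n x ⟨t, ht⟩
  exact ⟨t, fun r hr => by rw [← map_smul, ht r hr, map_zero]⟩

theorem homOf_comp_d {J : Ideal R} {n : ℕ} (z : I.cocomplex.X n) (hz : ∀ r ∈ J, r • z = 0)
    (hdz : diff I n z = 0) : homOf z hz ≫ I.cocomplex.d n (n + 1) = 0 := by
  apply quot_hom_ext
  change diff I n ((1 : R) • z) = 0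
  rw [one_smul, hdz]

/-- The local cohomology of the polynomial ring with support in the ideal generated by a set `S` of
variables is concentrated in degree `#S`: the `t`-th powers of these variables form a regular
sequence, which determines `Ext` out of the quotient by them. -/
theorem acyclic_gam {k σ : Type u} [Field k] (S : Finset σ)
    (I : InjectiveResolution (ModuleCat.of (MvPolynomial σ k) (MvPolynomial σ k)))
    (n : ℕ) (hn : n + 1 ≠ S.card) :
    Acyclic (diff I) (GamC I (Ideal.span (X '' (S : Set σ)))) n := by
  rintro z ⟨t, ht⟩ hdz
  have hz : ∀ r ∈ (powIdeal t S : Ideal (MvPolynomial σ k)), r • z = 0 := by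
    intro r hr
    refine ht r ((Ideal.span_le.2 ?_ : powIdeal t S ≤ _) hr)
    rintro _ ⟨s, hs, rfl⟩
    exact Ideal.pow_mem_pow (Ideal.subset_span (Set.mem_image_of_mem X hs)) t
  obtain ⟨g, hg⟩ := (I.extMk_eq_zero_iff (homOf z hz) (n + 1 + 1) rfl (homOf_comp_d I z hz hdz)
    n rfl).1 ((extConcentrated_powIdeal t S).1 _ hn _)
  refine ⟨g.hom (Submodule.Quotient.mk 1), ?_, ?_⟩
  · have hfg : (Ideal.span (X '' (S : Set σ)) : Ideal (MvPolynomial σ k)).FG :=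
      Submodule.fg_span (S.finite_toSet.image _)
    obtain ⟨N, hN⟩ := Ideal.exists_pow_le_of_le_radical_of_fg
      (I := Ideal.span (X '' (S : Set σ))) (J := (powIdeal t S : Ideal (MvPolynomial σ k))) (by
        rw [Ideal.span_le]
        rintro _ ⟨s, hs, rfl⟩
        exact ⟨t, Ideal.subset_span (Set.mem_image_of_mem (fun s => X s ^ t) hs)⟩) hfg
    exact ⟨N, fun r hr => smul_hom_one g (hN hr)⟩
  · have := congrArg (fun f => f.hom (Submodule.Quotient.mk 1)) hg
    refine this.trans ?_
    rw [homOf_mk, one_smul]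

end Ext

/-! ### Ext as a derived functor, by cocycles of a projective resolution -/

section OldExt

open CategoryTheory Opposite

theorem homologyUnop_inv_naturality {V : Type*} [Category V] [Limits.HasZeroMorphisms V]
    {ι : Type*} {c : ComplexShape ι} {K L : HomologicalComplex Vᵒᵖ c} (ψ : K ⟶ L) (i : ι)
    [K.HasHomology i] [L.HasHomology i] [K.unop.HasHomology i] [L.unop.HasHomology i] :
    (HomologicalComplex.homologyMap ψ i).unop ≫ (K.homologyUnop i).inv =
      (L.homologyUnop i).inv ≫ HomologicalComplex.homologyMap
        (K := L.unop) (L := K.unop) ((HomologicalComplex.unopFunctor _ _).map ψ.op) i := by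
  have h := congrArg Quiver.Hom.unop (HomologicalComplex.homologyOp_hom_naturality
    (K := L.unop) (L := K.unop) ((HomologicalComplex.unopFunctor _ _).map ψ.op) i)
  have h' : (L.homologyUnop i).hom ≫ (HomologicalComplex.homologyMap ψ i).unop =
      HomologicalComplex.homologyMap
        (K := L.unop) (L := K.unop) ((HomologicalComplex.unopFunctor _ _).map ψ.op) i ≫
      (K.homologyUnop i).hom := h
  rw [Iso.comp_inv_eq, Category.assoc, Iso.eq_inv_comp]
  exact h'

theorem paste_squares {C : Type*} [Category C] {A A' B B' D D' : C} {a : A ⟶ A'} {p : A' ⟶ B'}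
    {q : A ⟶ B} {b : B ⟶ B'} {r : B' ⟶ D'} {s : B ⟶ D} {c : D ⟶ D'}
    (h₁ : a ≫ p = q ≫ b) (h₂ : b ≫ r = s ≫ c) : a ≫ p ≫ r = (q ≫ s) ≫ c := by
  rw [← Category.assoc, h₁, Category.assoc, h₂, Category.assoc]

variable {R : Type u} [CommRing R]

/-- Precomposition with a morphism of chain complexes, as a morphism of `Hom` complexes. -/
noncomputable def homMap {P Q : ChainComplex (ModuleCat.{u} R) ℕ} (φ : P ⟶ Q)
    (M : ModuleCat.{u} R) : Q.linearYonedaObj R M ⟶ P.linearYonedaObj R M :=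
  (HomologicalComplex.unopFunctor _ _).map
    ((((linearYoneda R (ModuleCat.{u} R)).obj M).rightOp.mapHomologicalComplex _).map φ).op

/-- The computation of `Ext` by a projective resolution is natural in the first variable. -/
theorem isoExt_naturality {N N' : ModuleCat.{u} R} (g : N ⟶ N') (P : ProjectiveResolution N)
    (P' : ProjectiveResolution N') (φ : P.complex ⟶ P'.complex)
    (comm : φ.f 0 ≫ P'.π.f 0 = P.π.f 0 ≫ g) (M : ModuleCat.{u} R) (n : ℕ) :
    ((Ext R (ModuleCat.{u} R) n).map g.op).app M ≫ (P.isoExt (R := R) n M).hom =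
      (P'.isoExt (R := R) n M).hom ≫ HomologicalComplex.homologyMap (homMap φ M) n := by
  have h1 := congrArg Quiver.Hom.unop
    (ProjectiveResolution.isoLeftDerivedObj_inv_naturality g P P' φ comm
      ((linearYoneda R (ModuleCat.{u} R)).obj M).rightOp n)
  have h3 := homologyUnop_inv_naturality
    ((((linearYoneda R (ModuleCat.{u} R)).obj M).rightOp.mapHomologicalComplex _).map φ) n
  exact paste_squares h1 h3

variable (K : CochainComplex (ModuleCat.{u} R) ℕ) (n : ℕ)

/-- The kernel of a differential of a complex of modules. -/
abbrev kerD : Submodule R (K.X n) := LinearMap.ker (K.d n (n + 1)).hom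

/-- The class in homology of an element in the kernel of the differential. -/
noncomputable def classOf : ModuleCat.of R (kerD K n) ⟶ K.homology n :=
  K.liftCycles (ModuleCat.ofHom (kerD K n).subtype) (n + 1) (by simp)
    (ModuleCat.hom_ext (LinearMap.ext fun z => z.2)) ≫ K.homologyπ n

theorem liftCycles_bijective : Function.Bijective
    (K.liftCycles (ModuleCat.ofHom (kerD K n).subtype) (n + 1) (by simp)
      (ModuleCat.hom_ext (LinearMap.ext fun z => z.2))).hom := by
  set l := K.liftCycles (ModuleCat.ofHom (kerD K n).subtype) (n + 1) (by simp)
      (ModuleCat.hom_ext (LinearMap.ext fun z => z.2)) with hl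
  have hi : Function.Injective (K.iCycles n).hom :=
    (ModuleCat.mono_iff_injective (K.iCycles n)).1 inferInstance
  have e : ∀ z, (K.iCycles n).hom (l.hom z) = z.1 := by
    intro z
    have : l ≫ K.iCycles n = ModuleCat.ofHom (kerD K n).subtype := K.liftCycles_i _ _ _ _
    exact congrArg (fun f => f.hom z) this
  constructor
  · intro x y hxy
    apply Subtype.ext
    rw [← e x, ← e y, hxy]
  · intro c
    refine ⟨⟨(K.iCycles n).hom c, ?_⟩, hi (e _)⟩
    exact congrArg (fun f => f.hom c) (K.iCycles_d n (n + 1))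

theorem classOf_surjective : Function.Surjective (classOf K n).hom := by
  have h : Function.Surjective (K.homologyπ n).hom :=
    (ModuleCat.epi_iff_surjective (K.homologyπ n)).1 inferInstance
  exact h.comp (liftCycles_bijective K n).2

theorem classOf_eq_zero_iff (z : kerD K (n + 1)) :
    (classOf K (n + 1)).hom z = 0 ↔ ∃ y, (K.d n (n + 1)).hom y = z.1 := by
  have hi : Function.Injective (K.iCycles (n + 1)).hom :=
    (ModuleCat.mono_iff_injective (K.iCycles (n + 1))).1 inferInstance
  have hex := ShortComplex.exact_of_g_is_cokernel
    (ShortComplex.mk (K.toCycles n (n + 1)) (K.homologyπ (n + 1)) (by simp))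
    (K.homologyIsCokernel n (n + 1) (by simp))
  rw [ShortComplex.moduleCat_exact_iff] at hex
  set l := K.liftCycles (ModuleCat.ofHom (kerD K (n + 1)).subtype) (n + 1 + 1) (by simp)
      (ModuleCat.hom_ext (LinearMap.ext fun z => z.2)) with hl
  have e : (K.iCycles (n + 1)).hom (l.hom z) = z.1 := by
    have : l ≫ K.iCycles (n + 1) = ModuleCat.ofHom (kerD K (n + 1)).subtype :=
      K.liftCycles_i _ _ _ _
    exact congrArg (fun f => f.hom z) this
  have e' : ∀ y, (K.iCycles (n + 1)).hom ((K.toCycles n (n + 1)).hom y) =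
      (K.d n (n + 1)).hom y := fun y =>
    congrArg (fun f => f.hom y) (K.toCycles_i n (n + 1))
  constructor
  · intro h
    obtain ⟨y, hy⟩ := hex (l.hom z) h
    refine ⟨y, ?_⟩
    rw [← e', ← e]
    exact congrArg _ hy
  · rintro ⟨y, hy⟩
    have : (K.toCycles n (n + 1)).hom y = l.hom z := hi (by rw [e', e, hy])
    change (K.homologyπ (n + 1)).hom (l.hom z) = 0
    rw [← this]
    exact congrArg (fun f => f.hom y) (K.toCycles_comp_homologyπ n (n + 1))

variable {K}

theorem classOf_naturality {L : CochainComplex (ModuleCat.{u} R) ℕ} (ψ : K ⟶ L) (z : kerD K n)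
    (hz : (ψ.f n).hom z.1 ∈ kerD L n) :
    (HomologicalComplex.homologyMap ψ n).hom ((classOf K n).hom z) =
      (classOf L n).hom ⟨(ψ.f n).hom z.1, hz⟩ := by
  have h1 : (HomologicalComplex.cyclesMap ψ n).hom ((K.liftCycles
      (ModuleCat.ofHom (kerD K n).subtype) (n + 1) (by simp)
      (ModuleCat.hom_ext (LinearMap.ext fun z => z.2))).hom z) =
      (L.liftCycles (ModuleCat.ofHom (kerD L n).subtype) (n + 1) (by simp)
      (ModuleCat.hom_ext (LinearMap.ext fun z => z.2))).hom ⟨(ψ.f n).hom z.1, hz⟩ := by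
    have hi : Function.Injective (L.iCycles n).hom :=
      (ModuleCat.mono_iff_injective (L.iCycles n)).1 inferInstance
    apply hi
    have a1 := congrArg (fun f => f.hom z) (K.liftCycles_i
      (ModuleCat.ofHom (kerD K n).subtype) (n + 1) (by simp)
      (ModuleCat.hom_ext (LinearMap.ext fun z => z.2)))
    have a2 := congrArg (fun f => f.hom ⟨(ψ.f n).hom z.1, hz⟩) (L.liftCycles_i
      (ModuleCat.ofHom (kerD L n).subtype) (n + 1) (by simp)
      (ModuleCat.hom_ext (LinearMap.ext fun z => z.2)))
    refine Eq.trans ?_ a2.symm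
    have a3 : ∀ c, (L.iCycles n).hom ((HomologicalComplex.cyclesMap ψ n).hom c) =
        (ψ.f n).hom ((K.iCycles n).hom c) := fun c =>
      congrArg (fun f => f.hom c) (HomologicalComplex.cyclesMap_i ψ n)
    exact (a3 _).trans (congrArg (ψ.f n).hom a1)
  have h2 : ∀ c, (HomologicalComplex.homologyMap ψ n).hom ((K.homologyπ n).hom c) =
      (L.homologyπ n).hom ((HomologicalComplex.cyclesMap ψ n).hom c) := fun c =>
    congrArg (fun f => f.hom c) (HomologicalComplex.homologyπ_naturality ψ n)
  exact (h2 _).trans (congrArg (L.homologyπ n).hom h1)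

end OldExt

/-! ### Comparison of the two definitions of Ext -/

section Compare

open CategoryTheory Opposite

variable {R : Type u} [CommRing R] {N : ModuleCat.{u} R}

/-- The class in `Ext R (ModuleCat R) n` of a cocycle of a projective resolution. -/
noncomputable def oldMk (P : ProjectiveResolution N) (M : ModuleCat.{u} R) (n : ℕ) :
    kerD (P.complex.linearYonedaObj R M) n →ₗ[R]
      ((Ext R (ModuleCat.{u} R) n).obj (op N)).obj M :=
  (P.isoExt (R := R) n M).inv.hom.comp (classOf _ n).hom

theorem oldMk_surjective (P : ProjectiveResolution N) (M : ModuleCat.{u} R) (n : ℕ) :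
    Function.Surjective (oldMk P M n) :=
  ((ModuleCat.epi_iff_surjective (P.isoExt (R := R) n M).inv).1 inferInstance).comp
    (classOf_surjective _ n)

theorem oldMk_eq_zero_iff (P : ProjectiveResolution N) (M : ModuleCat.{u} R) (n : ℕ)
    (z : kerD (P.complex.linearYonedaObj R M) (n + 1)) :
    oldMk P M (n + 1) z = 0 ↔
      ∃ g : P.complex.X n ⟶ M, P.complex.d (n + 1) n ≫ g = z.1 := by
  have hi : Function.Injective (P.isoExt (R := R) (n + 1) M).inv.hom :=
    (ModuleCat.mono_iff_injective (P.isoExt (R := R) (n + 1) M).inv).1 inferInstance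
  have h : oldMk P M (n + 1) z = 0 ↔ (classOf _ (n + 1)).hom z = 0 := by
    rw [← map_eq_zero_iff _ hi]; rfl
  rw [h, classOf_eq_zero_iff]
  rfl

theorem oldMk_naturality {N' : ModuleCat.{u} R} (g : N ⟶ N') (P : ProjectiveResolution N)
    (P' : ProjectiveResolution N') (φ : P.complex ⟶ P'.complex)
    (comm : φ.f 0 ≫ P'.π.f 0 = P.π.f 0 ≫ g) (M : ModuleCat.{u} R) (n : ℕ)
    (z : kerD (P'.complex.linearYonedaObj R M) n)
    (w : kerD (P.complex.linearYonedaObj R M) n)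
    (hw : (w.1 : P.complex.X n ⟶ M) = φ.f n ≫ z.1) :
    (((Ext R (ModuleCat.{u} R) n).map g.op).app M).hom (oldMk P' M n z) = oldMk P M n w := by
  have hi : Function.Injective (P.isoExt (R := R) n M).hom.hom :=
    (ModuleCat.mono_iff_injective (P.isoExt (R := R) n M).hom).1 inferInstance
  apply hi
  have h1 : ∀ y, (P.isoExt (R := R) n M).hom.hom
      ((((Ext R (ModuleCat.{u} R) n).map g.op).app M).hom y) =
      (HomologicalComplex.homologyMap (homMap φ M) n).hom ((P'.isoExt (R := R) n M).hom.hom y) :=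
    fun y => congrArg (fun f => f.hom y) (isoExt_naturality g P P' φ comm M n)
  have h2 : ∀ {N : ModuleCat.{u} R} (P : ProjectiveResolution N)
      (z : kerD (P.complex.linearYonedaObj R M) n),
      (P.isoExt (R := R) n M).hom.hom (oldMk P M n z) = (classOf _ n).hom z :=
    fun P z => congrArg
      (fun f : HomologicalComplex.homology (P.complex.linearYonedaObj R M) n ⟶ _ =>
        f.hom ((classOf _ n).hom z)) (P.isoExt (R := R) n M).inv_hom_id
  have e : ((homMap φ M).f n).hom z.1 = w.1 := hw.symm
  have h3 := classOf_naturality n (homMap φ M) z (by rw [e]; exact w.2)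
  refine (h1 _).trans ((congrArg _ (h2 P' z)).trans (h3.trans ?_))
  rw [h2 P w]
  exact congrArg (classOf _ n).hom (Subtype.ext e)

/-- The class in `Abelian.Ext` of a cocycle of a projective resolution, as a linear map. -/
noncomputable def newMk (P : ProjectiveResolution N) (M : ModuleCat.{u} R) (n : ℕ) :
    kerD (P.complex.linearYonedaObj R M) n →ₗ[R] Abelian.Ext N M n where
  toFun z := P.extMk z.1 (n + 1) rfl z.2
  map_add' x y := (P.add_extMk _ _ _ _ _ _).symm
  map_smul' r x := by
    have h := P.extMk_comp_mk₀ (x.1 : P.complex.X n ⟶ M) (n + 1) rfl x.2 (r • 𝟙 M)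
    rw [Abelian.Ext.mk₀_smul, Abelian.Ext.comp_smul, Abelian.Ext.comp_mk₀_id] at h
    refine Eq.trans ?_ h.symm
    congr 1

/-- The two definitions of `Ext` agree, compatibly with the classes of cocycles of a given
projective resolution. -/
theorem exists_extEquiv (P : ProjectiveResolution N) (M : ModuleCat.{u} R) (n : ℕ) :
    ∃ e : ((Ext R (ModuleCat.{u} R) (n + 1)).obj (op N)).obj M ≃ₗ[R] Abelian.Ext N M (n + 1),
      ∀ z, e (oldMk P M (n + 1) z) = newMk P M (n + 1) z := by
  refine equivOfSurj (oldMk P M (n + 1)) (newMk P M (n + 1)) (oldMk_surjective P M (n + 1)) ?_ ?_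
  · intro α
    obtain ⟨f, hf, h⟩ := P.extMk_surjective α (n + 1 + 1) rfl
    exact ⟨⟨f, hf⟩, h⟩
  · intro z
    rw [oldMk_eq_zero_iff]
    exact (P.extMk_eq_zero_iff (z.1 : P.complex.X (n + 1) ⟶ M) (n + 1 + 1) rfl z.2 n rfl).symm

/-- An isomorphism between the two definitions of `Ext`. -/
noncomputable def extEquiv (N M : ModuleCat.{u} R) (n : ℕ) :
    ((Ext R (ModuleCat.{u} R) (n + 1)).obj (op N)).obj M ≃ₗ[R] Abelian.Ext N M (n + 1) :=
  (exists_extEquiv (ProjectiveResolution.of N) M n).choose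

theorem extEquiv_oldMk (N M : ModuleCat.{u} R) (n : ℕ)
    (z : kerD ((ProjectiveResolution.of N).complex.linearYonedaObj R M) (n + 1)) :
    extEquiv N M n (oldMk (ProjectiveResolution.of N) M (n + 1) z) =
      newMk (ProjectiveResolution.of N) M (n + 1) z :=
  (exists_extEquiv (ProjectiveResolution.of N) M n).choose_spec z

/-- Naturality in the first variable; it makes the comparison of `Ext` groups pass to the colimit
defining local cohomology. -/
theorem extEquiv_naturality {N N' : ModuleCat.{u} R} (g : N ⟶ N') (M : ModuleCat.{u} R) (n : ℕ)
    (x : ((Ext R (ModuleCat.{u} R) (n + 1)).obj (op N')).obj M) :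
    extEquiv N M n ((((Ext R (ModuleCat.{u} R) (n + 1)).map g.op).app M).hom x) =
      (Abelian.Ext.mk₀ g).comp (extEquiv N' M n x) (zero_add _) := by
  let P := ProjectiveResolution.of N
  let P' := ProjectiveResolution.of N'
  let φ : P.complex ⟶ P'.complex := ProjectiveResolution.lift g P P'
  have comm : φ.f 0 ≫ P'.π.f 0 = P.π.f 0 ≫ g := ProjectiveResolution.lift_commutes_zero g P P'
  let φ' : ProjectiveResolution.Hom P P' g := ⟨φ, comm⟩
  obtain ⟨z, rfl⟩ := oldMk_surjective P' M (n + 1) x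
  have hz : P'.complex.d (n + 1 + 1) (n + 1) ≫ z.1 = 0 := z.2
  have key : ∀ f : P'.complex.X (n + 1) ⟶ M, P'.complex.d (n + 1 + 1) (n + 1) ≫ f = 0 →
      P.complex.d (n + 1 + 1) (n + 1) ≫ φ.f (n + 1) ≫ f = 0 := by
    intro f hf
    rw [← φ.comm_assoc, hf, Limits.comp_zero]
  have hw := key z.1 hz
  let w : kerD (P.complex.linearYonedaObj R M) (n + 1) :=
    ⟨(φ.f (n + 1) ≫ (z.1 : P'.complex.X (n + 1) ⟶ M) : P.complex.X (n + 1) ⟶ M), hw⟩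
  rw [oldMk_naturality g P P' φ comm M (n + 1) z w rfl, extEquiv_oldMk, extEquiv_oldMk]
  exact (P'.mk₀_comp_extMk _ _ rfl hz φ').symm

end Compare

/-! ### Local cohomology by an injective resolution -/

section LocalCohomology

open CategoryTheory Opposite

variable {R : Type u} [CommRing R]

/-- The projection `R/J^t ⟶ R/J^s` for `s ≤ t`. -/
abbrev quotMap (J : Ideal R) {s t : ℕ} (h : s ≤ t) :
    ModuleCat.of R (R ⧸ J ^ t) ⟶ ModuleCat.of R (R ⧸ J ^ s) :=
  ModuleCat.ofHom (Submodule.mapQ _ _ LinearMap.id (Ideal.pow_le_pow_right h))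

/-- Local cohomology is the filtered colimit of the modules `Ext^{n+1}(R/J^t, M)`, stated in terms
of elements. -/
theorem exists_colimit_maps (J : Ideal R) (M : ModuleCat.{u} R) (n : ℕ) :
    ∃ ι : ∀ t : ℕ, Abelian.Ext (ModuleCat.of R (R ⧸ J ^ t)) M (n + 1) →ₗ[R]
        (localCohomology J (n + 1)).obj M,
      (∀ s t (h : s ≤ t) x,
        ι t ((Abelian.Ext.mk₀ (quotMap J h)).comp x (zero_add _)) = ι s x) ∧
      (∀ y, ∃ t x, ι t x = y) ∧
      (∀ s x, ι s x = 0 → ∃ t, ∃ h : s ≤ t,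
        (Abelian.Ext.mk₀ (quotMap J h)).comp x (zero_add _) = 0) := by
  let D : (ℕᵒᵖ)ᵒᵖ ⥤ ModuleCat.{u} R ⥤ ModuleCat.{u} R :=
    localCohomology.diagram (localCohomology.idealPowersDiagram J) (n + 1)
  let F : (ℕᵒᵖ)ᵒᵖ ⥤ ModuleCat.{u} R := D ⋙ (evaluation _ _).obj M
  have : Limits.PreservesFilteredColimitsOfSize.{0, 0} (forget (ModuleCat.{u} R)) :=
    Limits.preservesSmallestFilteredColimits_of_preservesFilteredColimits.{u, u} _
  have : Limits.PreservesColimitsOfShape (ℕᵒᵖ)ᵒᵖ (forget (ModuleCat.{u} R)) :=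
    Limits.PreservesFilteredColimitsOfSize.preserves_filtered_colimits _
  let c := ((evaluation _ _).obj M).mapCocone (Limits.colimit.cocone D)
  have hc : Limits.IsColimit c :=
    Limits.isColimitOfPreserves ((evaluation _ _).obj M) (Limits.colimit.isColimit D)
  let E : ∀ t : ℕ, F.obj (op (op t)) ≃ₗ[R] Abelian.Ext (ModuleCat.of R (R ⧸ J ^ t)) M (n + 1) :=
    fun t => extEquiv (ModuleCat.of R (R ⧸ J ^ t)) M n
  have hE : ∀ s t (h : s ≤ t) x, E t ((F.map (homOfLE h).op.op).hom x) =
      (Abelian.Ext.mk₀ (quotMap J h)).comp (E s x) (zero_add _) :=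
    fun s t h x => extEquiv_naturality (quotMap J h) M n x
  let ι : ∀ t : ℕ, Abelian.Ext (ModuleCat.of R (R ⧸ J ^ t)) M (n + 1) →ₗ[R]
      (localCohomology J (n + 1)).obj M :=
    fun t => (c.ι.app (op (op t))).hom.comp (E t).symm.toLinearMap
  refine ⟨ι, ?_, ?_, ?_⟩
  · intro s t h x
    obtain ⟨x, rfl⟩ := (E s).surjective x
    rw [← hE]
    have h1 : (c.ι.app (op (op t))).hom.comp (F.map (homOfLE h).op.op).hom =
        (c.ι.app (op (op s))).hom := congrArg ModuleCat.Hom.hom (c.w (homOfLE h).op.op)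
    change (c.ι.app (op (op t))).hom ((E t).symm (E t _)) =
      (c.ι.app (op (op s))).hom ((E s).symm (E s _))
    rw [LinearEquiv.symm_apply_apply, LinearEquiv.symm_apply_apply, ← h1]
    rfl
  · intro y
    obtain ⟨⟨⟨t⟩⟩, x, hx⟩ := Limits.Concrete.isColimit_exists_rep F hc y
    refine ⟨t, E t x, ?_⟩
    change (c.ι.app (op (op t))).hom ((E t).symm (E t _)) = y
    rw [LinearEquiv.symm_apply_apply]
    exact hx
  · intro s x hx
    obtain ⟨x, rfl⟩ := (E s).surjective x
    change (c.ι.app (op (op s))).hom ((E s).symm (E s _)) = 0 at hx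
    rw [LinearEquiv.symm_apply_apply] at hx
    obtain ⟨⟨⟨t⟩⟩, f, g, hf⟩ := Limits.Concrete.isColimit_exists_of_rep_eq F hc x 0
      (hx.trans (map_zero (c.ι.app (op (op s))).hom).symm)
    have hst : s ≤ t := leOfHom f.unop.unop
    refine ⟨t, hst, ?_⟩
    rw [← hE]
    have e : (F.map (homOfLE hst).op.op).hom x = 0 := hf.trans (map_zero (F.map g).hom)
    rw [e, map_zero]

variable {M : ModuleCat.{u} R} (I : InjectiveResolution M)

/-- The class in `Ext^{n+1}(R/J, M)` of a cocycle of degree `n + 1` killed by `J`. -/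
noncomputable def extClass {J : Ideal R} {n : ℕ} (z : I.cocomplex.X (n + 1))
    (hz : ∀ r ∈ J, r • z = 0) (hdz : diff I (n + 1) z = 0) :
    Abelian.Ext (ModuleCat.of R (R ⧸ J)) M (n + 1) :=
  I.extMk (homOf z hz) (n + 1 + 1) rfl (homOf_comp_d I z hz hdz)

theorem extClass_comp (J : Ideal R) {s t n : ℕ} (h : s ≤ t) (z : I.cocomplex.X (n + 1))
    (hz : ∀ r ∈ J ^ s, r • z = 0) (hdz : diff I (n + 1) z = 0) :
    (Abelian.Ext.mk₀ (quotMap J h)).comp (extClass I z hz hdz) (zero_add _) =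
      extClass I z (fun r hr => hz r (Ideal.pow_le_pow_right h hr)) hdz := by
  refine (I.mk₀_comp_extMk (homOf z hz) (n + 1 + 1) rfl (homOf_comp_d I z hz hdz)
    (quotMap J h)).trans ?_
  have e : quotMap J h ≫ homOf z hz =
      homOf z (fun r hr => hz r (Ideal.pow_le_pow_right h hr)) := quot_hom_ext rfl
  unfold extClass
  congr 1

theorem extClass_add {J : Ideal R} {n : ℕ} (z w : I.cocomplex.X (n + 1))
    (hz : ∀ r ∈ J, r • z = 0) (hdz : diff I (n + 1) z = 0)
    (hw : ∀ r ∈ J, r • w = 0) (hdw : diff I (n + 1) w = 0)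
    (hzw : ∀ r ∈ J, r • (z + w) = 0) (hdzw : diff I (n + 1) (z + w) = 0) :
    extClass I (z + w) hzw hdzw = extClass I z hz hdz + extClass I w hw hdw := by
  refine Eq.trans ?_ (I.add_extMk _ _ _ _ _ _).symm
  have e : homOf (z + w) hzw = homOf z hz + homOf w hw :=
    quot_hom_ext (by
      change (1 : R) • (z + w) = (1 : R) • z + (1 : R) • w
      rw [smul_add])
  unfold extClass
  congr 1

theorem extClass_smul {J : Ideal R} {n : ℕ} (c : R) (z : I.cocomplex.X (n + 1))
    (hz : ∀ r ∈ J, r • z = 0) (hdz : diff I (n + 1) z = 0)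
    (hcz : ∀ r ∈ J, r • (c • z) = 0) (hdcz : diff I (n + 1) (c • z) = 0) :
    extClass I (c • z) hcz hdcz = c • extClass I z hz hdz := by
  rw [← smul_id_comp]
  refine Eq.trans ?_ (I.mk₀_comp_extMk _ _ _ _ _).symm
  have e : homOf (c • z) hcz = (c • 𝟙 _) ≫ homOf z hz :=
    quot_hom_ext (by
      rw [Linear.smul_comp, Category.id_comp]
      change (1 : R) • (c • z) = c • ((1 : R) • z)
      rw [one_smul, one_smul])
  unfold extClass
  congr 1

theorem extClass_surjective {J : Ideal R} {n : ℕ}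
    (x : Abelian.Ext (ModuleCat.of R (R ⧸ J)) M (n + 1)) :
    ∃ z hz hdz, extClass I (n := n) (J := J) z hz hdz = x := by
  obtain ⟨f, hf, rfl⟩ := I.extMk_surjective x (n + 1 + 1) rfl
  have hz := fun r (hr : r ∈ J) => smul_hom_one f hr
  refine ⟨f.hom (Submodule.Quotient.mk 1), hz,
    congrArg (fun g => g.hom (Submodule.Quotient.mk 1)) hf, ?_⟩
  have e : homOf (f.hom (Submodule.Quotient.mk 1)) hz = f :=
    quot_hom_ext (one_smul R _)
  unfold extClass
  congr 1

theorem extClass_eq_zero_iff {J : Ideal R} {n : ℕ} (z : I.cocomplex.X (n + 1))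
    (hz : ∀ r ∈ J, r • z = 0) (hdz : diff I (n + 1) z = 0) :
    extClass I z hz hdz = 0 ↔ ∃ y, (∀ r ∈ J, r • y = 0) ∧ diff I n y = z := by
  rw [extClass, I.extMk_eq_zero_iff _ _ _ _ n rfl]
  constructor
  · rintro ⟨g, hg⟩
    refine ⟨g.hom (Submodule.Quotient.mk 1), fun r hr => smul_hom_one g hr, ?_⟩
    refine (congrArg (fun f => f.hom (Submodule.Quotient.mk 1)) hg).trans ?_
    exact one_smul R z
  · rintro ⟨y, hy, rfl⟩
    refine ⟨homOf y hy, quot_hom_ext ?_⟩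
    change diff I n ((1 : R) • y) = (1 : R) • diff I n y
    rw [map_smul]

/-- Local cohomology is computed by the torsion subcomplex of an injective resolution. -/
theorem localCohomology_equiv_coh (J : Ideal R) (n : ℕ) :
    Nonempty ((localCohomology J (n + 1)).obj M ≃ₗ[R] Coh (diff I) (GamC I J) n) := by
  obtain ⟨ι, hι, hsurj, hzero⟩ := exists_colimit_maps J M n
  -- the exponent by which a cocycle is killed does not affect its image in the colimit
  have indep : ∀ (z : I.cocomplex.X (n + 1)) (hdz : diff I (n + 1) z = 0) (s t : ℕ)
      (hs : ∀ r ∈ J ^ s, r • z = 0) (ht : ∀ r ∈ J ^ t, r • z = 0),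
      ι s (extClass I z hs hdz) = ι t (extClass I z ht hdz) := by
    intro z hdz s t hs ht
    rw [← hι s _ (le_max_left s t), ← hι t _ (le_max_right s t), extClass_comp, extClass_comp]
  choose e he using fun z : cocycles (diff I) (GamC I J) (n + 1) => z.2.1
  have hd : ∀ z : cocycles (diff I) (GamC I J) (n + 1), diff I (n + 1) z = 0 := fun z => z.2.2
  let Φ : cocycles (diff I) (GamC I J) (n + 1) →ₗ[R] (localCohomology J (n + 1)).obj M :=
    { toFun := fun z => ι (e z) (extClass I z (he z) (hd z))
      map_add' := fun z w => by
        have hz : ∀ r ∈ J ^ (max (e z) (e w)), r • (z : I.cocomplex.X (n + 1)) = 0 :=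
          fun r hr => he z r (Ideal.pow_le_pow_right (le_max_left _ _) hr)
        have hw : ∀ r ∈ J ^ (max (e z) (e w)), r • (w : I.cocomplex.X (n + 1)) = 0 :=
          fun r hr => he w r (Ideal.pow_le_pow_right (le_max_right _ _) hr)
        have hzw : ∀ r ∈ J ^ (max (e z) (e w)), r • (z + w : I.cocomplex.X (n + 1)) = 0 :=
          fun r hr => by rw [smul_add, hz r hr, hw r hr, add_zero]
        rw [indep z (hd z) _ _ (he z) hz, indep w (hd w) _ _ (he w) hw, ← map_add,
          ← extClass_add I z.1 w.1 hz (hd z) hw (hd w) hzw (hd (z + w))]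
        exact indep _ _ _ _ _ _
      map_smul' := fun c z => by
        have hcz : ∀ r ∈ J ^ e z, r • (c • z : I.cocomplex.X (n + 1)) = 0 :=
          fun r hr => by rw [smul_comm, he z r hr, smul_zero]
        rw [RingHom.id_apply, ← map_smul,
          ← extClass_smul I c z.1 (he z) (hd z) hcz (hd (c • z))]
        exact indep _ _ _ _ _ _ }
  refine ⟨(equivOfSurj Φ (Submodule.mkQ _) ?_ (Submodule.mkQ_surjective _) ?_).choose⟩
  · intro y
    obtain ⟨t, x, rfl⟩ := hsurj y
    obtain ⟨z, hz, hdz, rfl⟩ := extClass_surjective I x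
    exact ⟨⟨z, ⟨t, hz⟩, hdz⟩, indep _ _ _ _ _ _⟩
  · intro z
    rw [mk_eq_zero]
    constructor
    · intro h
      obtain ⟨t, ht, h'⟩ := hzero _ _ h
      rw [extClass_comp, extClass_eq_zero_iff] at h'
      obtain ⟨y, hy, hyz⟩ := h'
      exact ⟨y, ⟨t, hy⟩, hyz⟩
    · rintro ⟨y, ⟨t, hy⟩, hyz⟩
      have hz : ∀ r ∈ J ^ t, r • (z : I.cocomplex.X (n + 1)) = 0 := fun r hr => by
        rw [← hyz, ← map_smul, hy r hr, map_zero]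
      change ι (e z) (extClass I z (he z) (hd z)) = 0
      rw [indep z (hd z) _ t (he z) hz, (extClass_eq_zero_iff I z hz (hd z)).2 ⟨y, hy, hyz⟩,
        map_zero]

end LocalCohomology

/-! ### The three isomorphisms -/

section Assembly

open CategoryTheory

/-- The three isomorphisms on the level of the torsion subcomplexes of an injective resolution,
derived from the acyclicity of the relevant subcomplexes outside a single degree. -/
theorem coh_equivs {R : Type u} [CommRing R] [IsNoetherianRing R] {M : ModuleCat.{u} R}
    (I : InjectiveResolution M) (B₁ B₂ B₃ : Ideal R)
    (h₁ : ∀ n, n + 1 ≠ 2 → Acyclic (diff I) (GamC I B₁) n)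
    (h₂ : ∀ n, n + 1 ≠ 2 → Acyclic (diff I) (GamC I B₂) n)
    (h₃ : ∀ n, n + 1 ≠ 2 → Acyclic (diff I) (GamC I B₃) n)
    (h₁₂ : ∀ n, n + 1 ≠ 4 → Acyclic (diff I) (GamC I (B₁ + B₂)) n)
    (h₁₃ : ∀ n, n + 1 ≠ 4 → Acyclic (diff I) (GamC I (B₁ + B₃)) n)
    (h₂₃ : ∀ n, n + 1 ≠ 4 → Acyclic (diff I) (GamC I (B₂ + B₃)) n)
    (h₁₂₃ : ∀ n, n + 1 ≠ 6 → Acyclic (diff I) (GamC I (B₁ + B₂ + B₃)) n) :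
    Nonempty (Coh (diff I) (GamC I (B₁ * B₂ * B₃)) 1 ≃ₗ[R]
      Coh (diff I) (GamC I B₁) 1 × Coh (diff I) (GamC I B₂) 1 × Coh (diff I) (GamC I B₃) 1) ∧
    Nonempty (Coh (diff I) (GamC I (B₁ * B₂ * B₃)) 2 ≃ₗ[R]
      Coh (diff I) (GamC I (B₁ + B₂)) 3 × Coh (diff I) (GamC I (B₁ + B₃)) 3 ×
        Coh (diff I) (GamC I (B₂ + B₃)) 3) ∧
    Nonempty (Coh (diff I) (GamC I (B₁ * B₂ * B₃)) 3 ≃ₗ[R]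
      Coh (diff I) (GamC I (B₁ + B₂ + B₃)) 5) := by
  have hinj : ∀ n, Module.Injective R (I.cocomplex.X n) := fun n =>
    Module.injective_module_of_injective_object R _ (inj := I.injective n)
  have hmul : ∀ J K, GamC I (J * K) = GamC I J ⊔ GamC I K := fun J K => funext fun n =>
    gam_mul J K
  have hadd : ∀ J K, GamC I (J + K) = GamC I J ⊓ GamC I K := fun J K => funext fun n =>
    gam_add J K
  have hdist : ∀ J K L, (GamC I J ⊔ GamC I K) ⊓ GamC I L ≤
      (GamC I J ⊓ GamC I L) ⊔ (GamC I K ⊓ GamC I L) := fun J K L n => gam_dist J K L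
  have hs := isSub_gamC I
  have dd := diff_diff I
  have s₁₂ : IsSub (diff I) (GamC I B₁ ⊔ GamC I B₂) := (hs B₁).sup (hs B₂)
  have s₁₃ : IsSub (diff I) (GamC I B₁ ⊓ GamC I B₃) := (hs B₁).inf (hs B₃)
  have s₂₃ : IsSub (diff I) (GamC I B₂ ⊓ GamC I B₃) := (hs B₂).inf (hs B₃)
  rw [hmul, hmul, hadd (B₁ + B₂), hadd B₁ B₂, hadd B₁ B₃, hadd B₂ B₃]
  rw [hadd (B₁ + B₂), hadd] at h₁₂₃
  rw [hadd] at h₁₂ h₁₃ h₂₃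
  set G₁ := GamC I B₁ with hG₁
  set G₂ := GamC I B₂ with hG₂
  set G₃ := GamC I B₃ with hG₃
  have e1 : (G₁ ⊔ G₂) ⊓ G₃ = (G₁ ⊓ G₃) ⊔ (G₂ ⊓ G₃) :=
    le_antisymm (hdist _ _ _)
      (sup_le (inf_le_inf_right _ le_sup_left) (inf_le_inf_right _ le_sup_right))
  have e2 : (G₁ ⊓ G₃) ⊓ (G₂ ⊓ G₃) = G₁ ⊓ G₂ ⊓ G₃ := (inf_inf_distrib_right _ _ _).symm
  -- `(G₁ ⊔ G₂) ⊓ G₃` has cohomology only in degrees `4` and `5`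
  have a : ∀ n, n + 1 ≠ 4 → n + 1 ≠ 5 → Acyclic (diff I) ((G₁ ⊔ G₂) ⊓ G₃) n := by
    intro n h4 h5
    rw [e1]
    exact acyclic_sup s₁₃ s₂₃ dd (h₁₃ n h4) (h₂₃ n h4)
      (by rw [e2]; exact h₁₂₃ _ (by omega))
  refine ⟨?_, ?_, ?_⟩
  · obtain ⟨f⟩ := coh_sup_equiv_prod (n := 1) s₁₂ (hs B₃) dd
      (a 1 (by omega) (by omega)) (a 2 (by omega) (by omega))
    obtain ⟨g⟩ := coh_sup_equiv_prod (n := 1) (hs B₁) (hs B₂) dd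
      (h₁₂ 1 (by omega)) (h₁₂ 2 (by omega))
    exact ⟨f ≪≫ₗ (g.prodCongr (LinearEquiv.refl R _)) ≪≫ₗ LinearEquiv.prodAssoc R _ _ _⟩
  · obtain ⟨f⟩ := coh_sup₃_equiv (n := 2) (hs B₁) (hs B₂) (hs B₃) dd
      (hdist _ _ _) (hdist _ _ _) (hdist _ _ _)
      (h₁ 2 (by omega)) (h₂ 2 (by omega)) (h₃ 2 (by omega))
      (h₁ 3 (by omega)) (h₂ 3 (by omega)) (h₃ 3 (by omega))
      (h₁₂₃ 3 (by omega)) (h₁₂₃ 4 (by omega))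
    obtain ⟨g₁₂⟩ := coh_sup_equiv_inf (n := 2) (hs B₁) (hs B₂) dd
      (h₁ 2 (by omega)) (h₂ 2 (by omega)) (h₁ 3 (by omega)) (h₂ 3 (by omega))
    obtain ⟨g₁₃⟩ := coh_sup_equiv_inf (n := 2) (hs B₁) (hs B₃) dd
      (h₁ 2 (by omega)) (h₃ 2 (by omega)) (h₁ 3 (by omega)) (h₃ 3 (by omega))
    obtain ⟨g₂₃⟩ := coh_sup_equiv_inf (n := 2) (hs B₂) (hs B₃) dd
      (h₂ 2 (by omega)) (h₃ 2 (by omega)) (h₂ 3 (by omega)) (h₃ 3 (by omega))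
    exact ⟨f ≪≫ₗ g₁₂.prodCongr (g₁₃.prodCongr g₂₃)⟩
  · have b : ∀ n, n + 1 ≠ 2 → n + 1 ≠ 3 → Acyclic (diff I) (G₁ ⊔ G₂) n := fun n h2 h3 =>
      acyclic_sup (hs B₁) (hs B₂) dd (h₁ n h2) (h₂ n h2) (h₁₂ _ (by omega))
    obtain ⟨f⟩ := coh_sup_equiv_inf (n := 3) s₁₂ (hs B₃) dd
      (b 3 (by omega) (by omega)) (h₃ 3 (by omega)) (b 4 (by omega) (by omega)) (h₃ 4 (by omega))
    rw [e1] at f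
    obtain ⟨g⟩ := coh_sup_equiv_inf (n := 4) s₁₃ s₂₃ dd
      (h₁₃ 4 (by omega)) (h₂₃ 4 (by omega)) (h₁₃ 5 (by omega)) (h₂₃ 5 (by omega))
    rw [e2] at g
    exact ⟨f ≪≫ₗ g⟩

end Assembly

end LocCoh

/-- Let `R = k[X₀,…,X₅]`, `B₁ = (X₀,X₁)`, `B₂ = (X₂,X₃)`,
`B₃ = (X₄,X₅)`, `B = B₁·B₂·B₃` and `m = B₁ + B₂ + B₃`. Then, as `R`-modules,
`H²_B(R) ≅ H²_{B₁}(R) ⊕ H²_{B₂}(R) ⊕ H²_{B₃}(R)`,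
`H³_B(R) ≅ H⁴_{B₁+B₂}(R) ⊕ H⁴_{B₁+B₃}(R) ⊕ H⁴_{B₂+B₃}(R)` and
`H⁴_B(R) ≅ H⁶_m(R)`. -/
theorem localCohomology_description_P1xP1xP1
    {k : Type} [Field k] :
    ∀ (B₁ B₂ B₃ : Ideal (MvPolynomial (Fin 6) k)),
      B₁ = Ideal.span {X 0, X 1} → B₂ = Ideal.span {X 2, X 3} →
      B₃ = Ideal.span {X 4, X 5} →
      Nonempty
        (((localCohomology (B₁ * B₂ * B₃) 2).obj
            (ModuleCat.of (MvPolynomial (Fin 6) k) (MvPolynomial (Fin 6) k)))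
          ≃ₗ[MvPolynomial (Fin 6) k]
          (((localCohomology B₁ 2).obj
              (ModuleCat.of (MvPolynomial (Fin 6) k) (MvPolynomial (Fin 6) k))) ×
            ((localCohomology B₂ 2).obj
              (ModuleCat.of (MvPolynomial (Fin 6) k) (MvPolynomial (Fin 6) k))) ×
            ((localCohomology B₃ 2).obj
              (ModuleCat.of (MvPolynomial (Fin 6) k) (MvPolynomial (Fin 6) k))))) ∧
      Nonempty
        (((localCohomology (B₁ * B₂ * B₃) 3).obj
            (ModuleCat.of (MvPolynomial (Fin 6) k) (MvPolynomial (Fin 6) k)))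
          ≃ₗ[MvPolynomial (Fin 6) k]
          (((localCohomology (B₁ + B₂) 4).obj
              (ModuleCat.of (MvPolynomial (Fin 6) k) (MvPolynomial (Fin 6) k))) ×
            ((localCohomology (B₁ + B₃) 4).obj
              (ModuleCat.of (MvPolynomial (Fin 6) k) (MvPolynomial (Fin 6) k))) ×
            ((localCohomology (B₂ + B₃) 4).obj
              (ModuleCat.of (MvPolynomial (Fin 6) k) (MvPolynomial (Fin 6) k))))) ∧
      Nonempty
        (((localCohomology (B₁ * B₂ * B₃) 4).obj
            (ModuleCat.of (MvPolynomial (Fin 6) k) (MvPolynomial (Fin 6) k)))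
          ≃ₗ[MvPolynomial (Fin 6) k]
          ((localCohomology (B₁ + B₂ + B₃) 6).obj
            (ModuleCat.of (MvPolynomial (Fin 6) k) (MvPolynomial (Fin 6) k)))) := by
  intro B₁ B₂ B₃ hB₁ hB₂ hB₃
  let I := CategoryTheory.InjectiveResolution.of
    (ModuleCat.of (MvPolynomial (Fin 6) k) (MvPolynomial (Fin 6) k))
  have hB₁' : B₁ = Ideal.span (X '' (({0, 1} : Finset (Fin 6)) : Set (Fin 6))) := by
    rw [hB₁]; simp [Set.image_insert_eq]
  have hB₂' : B₂ = Ideal.span (X '' (({2, 3} : Finset (Fin 6)) : Set (Fin 6))) := by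
    rw [hB₂]; simp [Set.image_insert_eq]
  have hB₃' : B₃ = Ideal.span (X '' (({4, 5} : Finset (Fin 6)) : Set (Fin 6))) := by
    rw [hB₃]; simp [Set.image_insert_eq]
  have hadd : ∀ S T : Finset (Fin 6),
      (Ideal.span (X '' (S : Set (Fin 6))) + Ideal.span (X '' (T : Set (Fin 6))) :
        Ideal (MvPolynomial (Fin 6) k)) = Ideal.span (X '' ((S ∪ T : Finset (Fin 6)) : Set _)) := by
    intro S T
    rw [Finset.coe_union, Set.image_union, Ideal.span_union]
    rfl
  have acyc : ∀ (J : Ideal (MvPolynomial (Fin 6) k)) (S : Finset (Fin 6)) (c : ℕ),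
      J = Ideal.span (X '' (S : Set (Fin 6))) → S.card = c → ∀ n, n + 1 ≠ c →
      LocCoh.Acyclic (LocCoh.diff I) (LocCoh.GamC I J) n := by
    rintro J S c rfl rfl n hn
    exact LocCoh.acyclic_gam S I n hn
  obtain ⟨⟨f⟩, ⟨g⟩, ⟨h⟩⟩ := LocCoh.coh_equivs I B₁ B₂ B₃
    (acyc _ _ 2 hB₁' rfl) (acyc _ _ 2 hB₂' rfl) (acyc _ _ 2 hB₃' rfl)
    (acyc _ _ 4 (by rw [hB₁', hB₂', hadd]) rfl) (acyc _ _ 4 (by rw [hB₁', hB₃', hadd]) rfl)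
    (acyc _ _ 4 (by rw [hB₂', hB₃', hadd]) rfl)
    (acyc _ _ 6 (by rw [hB₁', hB₂', hB₃', hadd, hadd]) rfl)
  have e := fun J n => (LocCoh.localCohomology_equiv_coh I J n).some
  exact ⟨⟨e _ 1 ≪≫ₗ f ≪≫ₗ ((e _ 1).prodCongr ((e _ 1).prodCongr (e _ 1))).symm⟩,
    ⟨e _ 2 ≪≫ₗ g ≪≫ₗ ((e _ 3).prodCongr ((e _ 3).prodCongr (e _ 3))).symm⟩,
    ⟨e _ 3 ≪≫ₗ h ≪≫ₗ (e _ 5).symm⟩⟩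
end
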